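/- Let E ⊆ ℕ have positive upper Banach density, i.e. there exist δ > 0 and intervals [M_j, N_j] with N_j − M_j → ∞ such that |E ∩ [M_j, N_j]| ≥ δ·(N_j − M_j) for all j. Then for every k ∈ ℕ and every ε > 0, for all sufficiently large N ∈ ℕ there exist an integer n with N − N^{1/2+ε} ≤ n ≤ N and a ∈ ℕ such that {a, a+⌊n^{3/2}⌋, a+⌊(n+1)^{3/2}⌋, …, a+⌊(n+k)^{3/2}⌋} ⊆ E. -/

import Mathlib

open Filter Finset MeasureTheory

/-- Discrete derivative: `Δg(n) = g(n) - g(n-1)` for `n ≥ 2`, and `Δg(1) = g(1)`. -/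
noncomputable def dd (g : ℕ → ℝ) (n : ℕ) : ℝ := if n = 1 then g 1 else g n - g (n - 1)

/-- Iterated discrete derivative `Δ^k`. -/
noncomputable def ddIter (f : ℕ → ℝ) : ℕ → ℕ → ℝ
  | 0 => f
  | k + 1 => dd (ddIter f k)

/-- `N`-th `W`-weighted average `𝔼^W_{n ≤ N} x_n`. -/
noncomputable def wavg {Y : Type*} [AddCommGroup Y] [Module ℝ Y]
    (W : ℕ → ℝ) (x : ℕ → Y) (N : ℕ) : Y :=
  (W N)⁻¹ • ∑ n ∈ Finset.Icc 1 N, dd W n • x n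

/-- `W`-weighted average over the interval `[M, N]`. -/
noncomputable def wavgI {Y : Type*} [AddCommGroup Y] [Module ℝ Y]
    (W : ℕ → ℝ) (x : ℕ → Y) (M N : ℕ) : Y :=
  (W N - W M)⁻¹ • ∑ n ∈ Finset.Icc M N, dd W n • x n

/-- Cesàro average over the interval `[M, N]`. -/
noncomputable def cesaroI {Y : Type*} [AddCommGroup Y] [Module ℝ Y]
    (x : ℕ → Y) (M N : ℕ) : Y :=
  ((N : ℝ) - (M : ℝ))⁻¹ • ∑ n ∈ Finset.Icc M N, x n

/-- Iterated `W`-weighted averages: `iterAvg W x k N = 𝔼(k)^W_{n ≤ N} x_n`,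
with the convention `iterAvg W x 0 = x`. -/
noncomputable def iterAvg {Y : Type*} [AddCommGroup Y] [Module ℝ Y]
    (W : ℕ → ℝ) (x : ℕ → Y) : ℕ → ℕ → Y
  | 0, N => x N
  | k + 1, N => (W N)⁻¹ • ∑ n ∈ Finset.Icc 1 N, dd W n • iterAvg W x k n

/-- The uniform `W`-weighted average of `x` equals `L`: `𝔼^W_unif x_n = L`. -/
def unifAvg {Y : Type*} [NormedAddCommGroup Y] [NormedSpace ℝ Y]
    (W : ℕ → ℝ) (x : ℕ → Y) (L : Y) : Prop :=
  ∀ ε > (0 : ℝ), ∃ K > (0 : ℝ), ∀ M N : ℕ, 1 ≤ M → M ≤ N → K ≤ W N - W M →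
    ‖wavgI W x M N - L‖ < ε

/-- `𝔼(∞)^W x_n = L`: `lim_{k → ∞} limsup_{N → ∞} ‖𝔼(k)^W_{n ≤ N}(x_n - L)‖ = 0`. -/
def iterInfty {Y : Type*} [NormedAddCommGroup Y] [NormedSpace ℝ Y]
    (W : ℕ → ℝ) (x : ℕ → Y) (L : Y) : Prop :=
  Tendsto (fun k => Filter.limsup (fun N => ‖iterAvg W (fun n => x n - L) (k + 1) N‖) atTop)
    atTop (nhds 0)

/-- Membership in the class `𝓕₁`. -/
def inF1 (f : ℕ → ℝ) : Prop :=
  Tendsto f atTop atTop ∧ Tendsto (fun n => dd f n) atTop (nhds 0) ∧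
    ∃ n₀ : ℕ, ∀ m n : ℕ, n₀ ≤ m → m ≤ n → dd f n ≤ dd f m

/-- `memF ℓ f` means `f ∈ 𝓕_{ℓ+1}`. -/
def memF : ℕ → (ℕ → ℝ) → Prop
  | 0, f => inF1 f
  | ℓ + 1, f => memF ℓ (dd f)

/-- Integer powers `T^m` of an invertible map `T` with inverse `e`. -/
def zpowIter {X : Type*} (T e : X → X) (m : ℤ) : X → X :=
  if 0 ≤ m then T^[m.toNat] else e^[(-m).toNat]

/-- `p(Δ)f(n)` for an integer polynomial `p`. -/
noncomputable def polyDD (p : Polynomial ℤ) (f : ℕ → ℝ) (n : ℕ) : ℝ :=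
  ∑ j ∈ Finset.range (p.natDegree + 1), (p.coeff j : ℝ) * ddIter f j n

/-- `E ⊆ ℕ = {1, 2, ...}` has positive upper Banach density. -/
def posUBD (E : Set ℕ) : Prop :=
  ∃ δ : ℝ, 0 < δ ∧ ∃ M N : ℕ → ℕ, (∀ j, 1 ≤ M j ∧ M j ≤ N j) ∧
    Tendsto (fun j => N j - M j) atTop atTop ∧
    ∀ j, δ * ((N j : ℝ) - (M j : ℝ)) ≤ (Nat.card ↥(E ∩ Set.Icc (M j) (N j)) : ℝ)

/-!
For `n` near `(6q²u + 2/(3q))²` the sequence `n ^ (3/2)` is nearly affine with slope `d + 1/q`,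
where `d = 9q²u`. So, for large `u`, the pattern starting at a suitable such `n` depending on
`q`, `r`, `u` has the form `b - (x_q + (dq + 1)r)`, `b`, `b + d`, …, `b + kd`, where `x_q` does
not depend on `r`.

To find such a pattern in `E`, take an invariant mean on the bounded functions on `ℤ` that is
positive on `E`, and let `U` be the isometric shift of the associated Hilbert space. Since
`q'(dq + 1) - q(dq' + 1) = q' - q`, the averages of `U ^ (x_q + (dq + 1)r)` over `r` for
different `q` are nearly orthogonal on the complement of the vectors fixed by `U ^ (q' - q)`.
So, by the mean ergodic theorem, their average over `q` is close to the projection onto the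
`U`-invariant vectors, uniformly in `d` and `x_q`, as soon as `d` is divisible by all small
numbers. By the density Hales–Jewett theorem, among the subset sums `d` of any long enough
sequence there is one for which the progressions `b`, …, `b + kd` in `E` have mean bounded
below. Applying this to the points of `E` with many predecessors in `E` makes the projected
correlation positive.

Finally, if the theorem failed for infinitely many `N`, the `d` with `4d²/9` in one of the
corresponding windows `[N - N ^ (1/2 + ε), N]` would form a thick set, and a thick set contains
all subset sums of a long sequence of highly divisible numbers.
-/

section Averages

open scoped BigOperators

/-- The uniform average of a real function over a finite type. Only `Finite X` is assumed, so that
averages over types of words do not depend on a choice of `Fintype` instance. -/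
noncomputable def avg {X : Type*} [Finite X] (f : X → ℝ) : ℝ :=
  letI := Fintype.ofFinite X
  𝔼 x, f x

/-- The proportion of elements of a finite type that lie in `A`. -/
noncomputable def density {X : Type*} [Finite X] (A : Set X) : ℝ :=
  avg (A.indicator 1)

variable {X Y : Type*} [Finite X] [Finite Y]

lemma avg_eq_expect [Fintype X] (f : X → ℝ) : avg f = 𝔼 x, f x := by
  unfold avg
  convert rfl

lemma avg_add (f g : X → ℝ) : avg (fun x => f x + g x) = avg f + avg g :=
  Finset.expect_add_distrib _ f g

lemma avg_sub (f g : X → ℝ) : avg (fun x => f x - g x) = avg f - avg g :=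
  Finset.expect_sub_distrib _ f g

lemma avg_const_mul (c : ℝ) (f : X → ℝ) : avg (fun x => c * f x) = c * avg f :=
  (Finset.mul_expect _ f c).symm

lemma avg_sum {Φ : Type*} [Fintype Φ] (f : Φ → X → ℝ) :
    avg (fun x => ∑ p, f p x) = ∑ p, avg (f p) :=
  Finset.expect_sum_comm _ _ _

lemma avg_const [Nonempty X] (c : ℝ) : avg (fun _ : X => c) = c :=
  letI := Fintype.ofFinite X
  Fintype.expect_const c

lemma avg_mono {f g : X → ℝ} (h : ∀ x, f x ≤ g x) : avg f ≤ avg g :=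
  Finset.expect_le_expect fun x _ => h x

lemma avg_nonneg {f : X → ℝ} (h : ∀ x, 0 ≤ f x) : 0 ≤ avg f :=
  Finset.expect_nonneg fun x _ => h x

lemma avg_nonpos {f : X → ℝ} (h : ∀ x, f x ≤ 0) : avg f ≤ 0 :=
  (avg_mono h).trans_eq (Finset.expect_const_zero _)

lemma avg_le {f : X → ℝ} {c : ℝ} (hc : 0 ≤ c) (h : ∀ x, f x ≤ c) : avg f ≤ c := by
  rcases isEmpty_or_nonempty X with hX | hX
  · exact (avg_nonpos (fun x => hX.elim x)).trans hc
  · exact (avg_mono h).trans_eq (avg_const c)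

lemma le_avg [Nonempty X] {f : X → ℝ} {c : ℝ} (h : ∀ x, c ≤ f x) : c ≤ avg f :=
  (avg_const c).symm.trans_le (avg_mono h)

lemma exists_avg_le [Nonempty X] (f : X → ℝ) : ∃ x, avg f ≤ f x :=
  letI := Fintype.ofFinite X
  let ⟨x, _, hx⟩ := Finset.exists_le_of_le_expect Finset.univ_nonempty (le_refl (avg f))
  ⟨x, hx⟩

lemma avg_equiv (e : X ≃ Y) (f : Y → ℝ) : avg (fun x => f (e x)) = avg f := by
  have := Fintype.ofFinite X
  have := Fintype.ofFinite Y
  rw [avg_eq_expect, avg_eq_expect]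
  exact Fintype.expect_equiv e _ _ fun _ => rfl

lemma avg_prod (f : X × Y → ℝ) : avg f = avg fun x => avg fun y => f (x, y) := by
  have := Fintype.ofFinite X
  have := Fintype.ofFinite Y
  simp only [avg_eq_expect, ← Finset.univ_product_univ, Finset.expect_product]

lemma avg_comm (f : X → Y → ℝ) :
    (avg fun x => avg fun y => f x y) = avg fun y => avg fun x => f x y :=
  Finset.expect_comm _ _ _

lemma avg_sumElim {ι κ β : Type*} [Finite ι] [Finite κ] [Finite β] (f : (ι ⊕ κ → β) → ℝ) :
    avg f = avg fun x : ι → β => avg fun y : κ → β => f (Sum.elim x y) := by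
  rw [← avg_equiv (Equiv.sumArrowEquivProdArrow ι κ β).symm, avg_prod]
  rfl

lemma avg_option (f : Option X → ℝ) :
    avg f = (f none + Nat.card X * avg fun a => f (some a)) / (Nat.card X + 1) := by
  have := Fintype.ofFinite X
  rw [avg_eq_expect, avg_eq_expect, Fintype.expect_eq_sum_div_card, Fintype.sum_option,
    Nat.card_eq_fintype_card, Fintype.card_mul_expect, Fintype.card_option]
  push_cast
  rfl

lemma avg_update [Nonempty Y] [DecidableEq X] (j : X) (G : (X → Y) → ℝ) :
    avg G = avg fun t => avg fun y => G (Function.update t j y) := by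
  have update_split (s : {i // i ≠ j} → Y) (y' y : Y) :
      Function.update ((Equiv.funSplitAt j Y).symm (y', s)) j y
        = (Equiv.funSplitAt j Y).symm (y, s) := by
    ext i
    by_cases hi : i = j
    · subst hi; simp [Equiv.funSplitAt]
    · simp [Equiv.funSplitAt, hi]
  rw [← avg_equiv (Equiv.funSplitAt j Y).symm G,
    ← avg_equiv (Equiv.funSplitAt j Y).symm (fun t => avg fun y => G (Function.update t j y)),
    avg_prod, avg_prod, avg_comm]
  simp only [update_split, avg_const]

lemma sub_card_mul_le_of_le_avg [Nonempty X] {f : X → ℝ} {M c : ℝ} (hf : ∀ x, f x ≤ M)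
    (h : c ≤ avg f) (x : X) : M - Nat.card X * (M - c) ≤ f x := by
  have := Fintype.ofFinite X
  have sum_eq : ∑ x, (M - f x) = Nat.card X * (M - avg f) := by
    rw [avg_eq_expect, mul_sub, Nat.card_eq_fintype_card, Fintype.card_mul_expect,
      Finset.sum_sub_distrib, Finset.sum_const, Finset.card_univ, nsmul_eq_mul]
  have le_sum : M - f x ≤ ∑ x, (M - f x) :=
    Finset.single_le_sum (f := fun y => M - f y) (fun i _ => sub_nonneg.2 (hf i))
      (Finset.mem_univ x)
  have : (Nat.card X : ℝ) * (M - avg f) ≤ Nat.card X * (M - c) := by gcongr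
  linarith

lemma density_nonneg (A : Set X) : 0 ≤ density A :=
  avg_nonneg (Set.indicator_nonneg fun _ _ => zero_le_one)

lemma density_le_one (A : Set X) : density A ≤ 1 :=
  avg_le zero_le_one (Set.indicator_le_self' fun _ _ => zero_le_one)

lemma density_mono {A B : Set X} (h : A ⊆ B) : density A ≤ density B :=
  avg_mono (Set.indicator_le_indicator_of_subset h fun _ => zero_le_one)

lemma nonempty_of_density_pos {A : Set X} (h : 0 < density A) : A.Nonempty := by
  rw [Set.nonempty_iff_ne_empty]
  rintro rfl
  exact h.not_ge (avg_nonpos fun x => by simp)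

lemma density_eq_ncard_div (A : Set X) : density A = A.ncard / Nat.card X := by
  classical
  have := Fintype.ofFinite X
  rw [density, avg_eq_expect, Fintype.expect_eq_sum_div_card, Finset.sum_indicator_eq_sum_filter,
    Nat.card_eq_fintype_card, Set.ncard_eq_toFinset_card']
  simp [Set.toFinset]

lemma inv_card_le_density {A : Set X} (h : A.Nonempty) : (Nat.card X : ℝ)⁻¹ ≤ density A := by
  rw [density_eq_ncard_div, ← one_div]
  gcongr
  exact_mod_cast h.ncard_pos

lemma density_sumElim {ι κ β : Type*} [Finite ι] [Finite κ] [Finite β] (A : Set (ι ⊕ κ → β)) :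
    density A = avg fun x : ι → β => density {y : κ → β | Sum.elim x y ∈ A} :=
  avg_sumElim _

lemma density_sumElim_comm {ι κ β : Type*} [Finite ι] [Finite κ] [Finite β] (A : Set (ι ⊕ κ → β)) :
    density A = avg fun y : κ → β => density {x : ι → β | Sum.elim x y ∈ A} :=
  (density_sumElim A).trans (avg_comm _)

lemma indicator_iUnion_le_sum {X Φ : Type*} [Fintype Φ] (G : Φ → Set X) (x : X) :
    (⋃ p, G p).indicator (1 : X → ℝ) x ≤ ∑ p, (G p).indicator 1 x := by
  have indicator_nonneg p : 0 ≤ (G p).indicator (1 : X → ℝ) x :=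
    Set.indicator_nonneg (fun _ _ => zero_le_one) x
  by_cases hx : x ∈ ⋃ p, G p
  · obtain ⟨p, hp⟩ := Set.mem_iUnion.1 hx
    rw [Set.indicator_of_mem hx, ← Set.indicator_of_mem hp 1]
    exact Finset.single_le_sum (f := fun p => (G p).indicator (1 : X → ℝ) x)
      (fun q _ => indicator_nonneg q) (Finset.mem_univ p)
  · rw [Set.indicator_of_notMem hx]
    exact Finset.sum_nonneg fun q _ => indicator_nonneg q

lemma exists_div_card_le_of_le_sum {Φ : Type*} [Fintype Φ] {f : Φ → ℝ} {c : ℝ} (hc : 0 < c)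
    (h : c ≤ ∑ p, f p) : ∃ p, c / Nat.card Φ ≤ f p := by
  have : Nonempty Φ := by
    by_contra hΦ
    rw [not_nonempty_iff] at hΦ
    exact hc.not_ge (h.trans_eq (Fintype.sum_empty f))
  have sum_const : ∑ _p : Φ, c / Nat.card Φ = c := by
    rw [Finset.sum_const, Finset.card_univ, ← Nat.card_eq_fintype_card, nsmul_eq_mul,
      mul_div_cancel₀ _ (by exact_mod_cast Nat.card_pos.ne')]
  obtain ⟨p, -, hp⟩ := Finset.exists_le_of_sum_le Finset.univ_nonempty (sum_const.trans_le h)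
  exact ⟨p, hp⟩

lemma le_add_indicator {X : Type*} {f : X → ℝ} {b : ℝ} (hb : 0 ≤ b) (hf : ∀ x, f x ≤ 1) (x : X) :
    f x ≤ b + {x | b ≤ f x}.indicator 1 x := by
  by_cases hx : b ≤ f x
  · rw [Set.indicator_of_mem (show x ∈ {x | b ≤ f x} from hx), Pi.one_apply]
    linarith [hf x]
  · rw [Set.indicator_of_notMem (show x ∉ {x | b ≤ f x} from hx)]
    linarith

lemma exists_div_card_le_density {Φ : Type*} [Finite Φ] {G : Φ → Set X} {c : ℝ} (hc : 0 < c)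
    (h : c ≤ density (⋃ p, G p)) : ∃ p, c / Nat.card Φ ≤ density (G p) :=
  have := Fintype.ofFinite Φ
  exists_div_card_le_of_le_sum hc
    (h.trans ((avg_mono fun x => indicator_iUnion_le_sum G x).trans_eq (avg_sum _)))

lemma le_density_of_two_mul_le_avg [Nonempty X] {f : X → ℝ} {b : ℝ} (hb : 0 ≤ b)
    (hf : ∀ x, f x ≤ 1) (h : 2 * b ≤ avg f) : b ≤ density {x | b ≤ f x} := by
  have : avg f ≤ b + density {x | b ≤ f x} :=
    (avg_mono (le_add_indicator hb hf)).trans_eq (by rw [avg_add, avg_const, density])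
  linarith

end Averages

section CombinatorialSubspaces

variable {α β ι κ η θ : Type*}

instance finite_line [Finite α] [Finite ι] : Finite (Combinatorics.Line α ι) :=
  Finite.of_injective Combinatorics.Line.idxFun fun _ _ => Combinatorics.Line.ext

instance finite_subspace [Finite α] [Finite ι] [Finite η] :
    Finite (Combinatorics.Subspace η α ι) :=
  Finite.of_injective Combinatorics.Subspace.idxFun fun _ _ => Combinatorics.Subspace.ext

lemma subspace_injective (φ : Combinatorics.Subspace η α ι) : Function.Injective φ := by
  intro x y hxy
  ext e
  obtain ⟨i, hi⟩ := φ.proper e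
  rw [← φ.apply_inr (x := x) hi, ← φ.apply_inr (x := y) hi, hxy]

/-- The subspace `ψ` of the cube `η → α`, seen inside `ι → α` through the parametrization `φ`. -/
def subspaceComp (φ : Combinatorics.Subspace η α ι) (ψ : Combinatorics.Subspace θ α η) :
    Combinatorics.Subspace θ α ι where
  idxFun i := (φ.idxFun i).elim Sum.inl ψ.idxFun
  proper e := by
    obtain ⟨j, hj⟩ := ψ.proper e
    obtain ⟨i, hi⟩ := φ.proper j
    exact ⟨i, by simp [hi, hj]⟩

@[simp] lemma subspaceComp_apply (φ : Combinatorics.Subspace η α ι)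
    (ψ : Combinatorics.Subspace θ α η) (x : θ → α) : subspaceComp φ ψ x = φ (ψ x) := by
  ext i
  cases h : φ.idxFun i <;> simp [subspaceComp, Combinatorics.Subspace.coe_apply, h]

/-- The line `l` of the cube `η → α`, seen inside `ι → α` through the parametrization `φ`. -/
def subspaceCompLine (φ : Combinatorics.Subspace η α ι) (l : Combinatorics.Line α η) :
    Combinatorics.Line α ι where
  idxFun i := (φ.idxFun i).elim some l.idxFun
  proper := by
    obtain ⟨j, hj⟩ := l.proper
    obtain ⟨i, hi⟩ := φ.proper j
    exact ⟨i, by simp [hi, hj]⟩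

@[simp] lemma subspaceCompLine_apply (φ : Combinatorics.Subspace η α ι)
    (l : Combinatorics.Line α η) (a : α) : subspaceCompLine φ l a = φ (l a) := by
  ext i
  cases h : φ.idxFun i <;> simp [subspaceCompLine, Combinatorics.Subspace.coe_apply, h]

/-- The image of a subspace under a map `f` of alphabets. -/
def subspaceMap (f : α → β) (φ : Combinatorics.Subspace η α ι) : Combinatorics.Subspace η β ι where
  idxFun i := (φ.idxFun i).map f id
  proper e := (φ.proper e).imp fun i hi => by simp [hi]

@[simp] lemma subspaceMap_apply (f : α → β) (φ : Combinatorics.Subspace η α ι) (x : η → α) :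
    subspaceMap f φ (f ∘ x) = f ∘ φ x := by
  ext i
  cases h : φ.idxFun i <;> simp [subspaceMap, Combinatorics.Subspace.coe_apply, h]

/-- The product of two subspaces, in the product of their ambient cubes. -/
def subspaceProd (φ : Combinatorics.Subspace η α ι) (ψ : Combinatorics.Subspace θ α κ) :
    Combinatorics.Subspace (η ⊕ θ) α (ι ⊕ κ) where
  idxFun := Sum.elim (fun i => (φ.idxFun i).map id Sum.inl) fun i => (ψ.idxFun i).map id Sum.inr
  proper e := by
    rcases e with e | e
    · obtain ⟨i, hi⟩ := φ.proper e
      exact ⟨Sum.inl i, by simp [hi]⟩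
    · obtain ⟨i, hi⟩ := ψ.proper e
      exact ⟨Sum.inr i, by simp [hi]⟩

@[simp] lemma subspaceProd_apply (φ : Combinatorics.Subspace η α ι)
    (ψ : Combinatorics.Subspace θ α κ) (x : η ⊕ θ → α) :
    subspaceProd φ ψ x = Sum.elim (φ (x ∘ Sum.inl)) (ψ (x ∘ Sum.inr)) := by
  ext i
  rcases i with i | i
  · cases h : φ.idxFun i <;> simp [subspaceProd, Combinatorics.Subspace.coe_apply, h]
  · cases h : ψ.idxFun i <;> simp [subspaceProd, Combinatorics.Subspace.coe_apply, h]

/-- A subspace extended by the constant word `y` on further coordinates to its right. -/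
def subspaceFixRight (φ : Combinatorics.Subspace η α ι) (y : κ → α) :
    Combinatorics.Subspace η α (ι ⊕ κ) where
  idxFun := Sum.elim φ.idxFun fun i => Sum.inl (y i)
  proper e := let ⟨i, hi⟩ := φ.proper e; ⟨Sum.inl i, hi⟩

@[simp] lemma subspaceFixRight_apply (φ : Combinatorics.Subspace η α ι) (y : κ → α) (x : η → α) :
    subspaceFixRight φ y x = Sum.elim (φ x) y := by
  ext i
  rcases i with i | i <;> rfl

/-- A subspace extended by the constant word `w` on further coordinates to its left. -/
def subspaceFixLeft (w : ι → α) (ψ : Combinatorics.Subspace η α κ) :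
    Combinatorics.Subspace η α (ι ⊕ κ) where
  idxFun := Sum.elim (fun i => Sum.inl (w i)) ψ.idxFun
  proper e := let ⟨i, hi⟩ := ψ.proper e; ⟨Sum.inr i, hi⟩

@[simp] lemma subspaceFixLeft_apply (w : ι → α) (ψ : Combinatorics.Subspace η α κ) (x : η → α) :
    subspaceFixLeft w ψ x = Sum.elim w (ψ x) := by
  ext i
  rcases i with i | i <;> rfl

lemma reindex_directions_apply (φ : Combinatorics.Subspace η α ι) (e : η ≃ θ) (x : θ → α) :
    φ.reindex e (Equiv.refl α) (Equiv.refl ι) x = φ (x ∘ e) := by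
  ext i
  simp

end CombinatorialSubspaces

section RestrictedAlphabet

lemma exists_avg_le_add_pow (α : Type*) [Finite α] (B : ℕ) :
    ∃ (ι : Type) (_ : Finite ι), ∀ (f : (ι → Option α) → ℝ) (M : ℝ), 0 ≤ M → (∀ x, f x ≤ 1) →
      (∀ φ : Combinatorics.Subspace Unit (Option α) ι,
        (avg fun a : α => f (φ fun _ => some a)) ≤ M) →
      avg f ≤ M + (1 / (Nat.card α + 1 : ℝ)) ^ B := by
  induction B with
  | zero =>
    refine ⟨Empty, inferInstance, fun f M hM hf _ => ?_⟩
    rw [pow_zero]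
    linarith [avg_le zero_le_one hf]
  | succ B ih =>
    obtain ⟨ι, hι, ih⟩ := ih
    refine ⟨Unit ⊕ ι, inferInstance, fun f M hM hf hφ => ?_⟩
    set K : ℝ := (Nat.card α : ℝ)
    have first_letter : avg f = ((avg fun y : ι → Option α => f (Sum.elim (fun _ => none) y)) +
        K * avg fun a : α => avg fun y : ι → Option α => f (Sum.elim (fun _ => some a) y)) /
          (K + 1) := by
      rw [avg_sumElim, ← avg_equiv (Equiv.funUnique Unit (Option α)).symm, avg_option]
      rfl
    have first_none : (avg fun y : ι → Option α => f (Sum.elim (fun _ => none) y))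
        ≤ M + (1 / (K + 1)) ^ B :=
      ih _ M hM (fun x => hf _) fun φ => by
        simpa only [subspaceFixLeft_apply] using hφ (subspaceFixLeft (fun _ => none) φ)
    have first_some :
        (avg fun a : α => avg fun y : ι → Option α => f (Sum.elim (fun _ => some a) y)) ≤ M := by
      rw [avg_comm]
      refine avg_le hM fun y => ?_
      have := hφ (subspaceFixRight default y)
      simp only [subspaceFixRight_apply] at this
      exact this
    rw [first_letter, div_le_iff₀ (by positivity)]
    calc _ ≤ M + (1 / (K + 1)) ^ B + K * M := by gcongr
      _ = (M + (1 / (K + 1)) ^ (B + 1)) * (K + 1) := by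
        rw [pow_succ, add_mul, mul_assoc, one_div_mul_cancel (by positivity)]
        ring

lemma exists_line_avg_le_add (α : Type*) [Finite α] [Nonempty α] {ε : ℝ} (hε : 0 < ε) :
    ∃ (ι : Type) (_ : Finite ι), ∀ f : (ι → Option α) → ℝ, (∀ x, 0 ≤ f x) → (∀ x, f x ≤ 1) →
      ∃ φ : Combinatorics.Subspace Unit (Option α) ι,
        avg f ≤ (avg fun a : α => f (φ fun _ => some a)) + ε := by
  have card_pos : (0 : ℝ) < Nat.card α := by exact_mod_cast Nat.card_pos
  obtain ⟨B, hB⟩ := exists_pow_lt_of_lt_one (lt_min hε one_pos)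
    (show 1 / (Nat.card α + 1 : ℝ) < 1 by rw [div_lt_one (by positivity)]; linarith)
  obtain ⟨hBε, hB1⟩ := lt_min_iff.1 hB
  obtain ⟨ι, hι, h⟩ := exists_avg_le_add_pow α B
  have : Nonempty (Combinatorics.Subspace Unit (Option α) ι) := by
    by_contra hno
    have := h (fun _ => 1) 0 le_rfl (fun _ => le_rfl) fun φ => (hno ⟨φ⟩).elim
    rw [avg_const] at this
    linarith
  refine ⟨ι, hι, fun f hf₀ hf₁ => ?_⟩
  obtain ⟨φ, hφ⟩ := Finite.exists_max fun φ : Combinatorics.Subspace Unit (Option α) ι =>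
    avg fun a : α => f (φ fun _ => some a)
  exact ⟨φ, by linarith [h f _ (avg_nonneg fun _ => hf₀ _) hf₁ hφ]⟩

/-- An equivalence appending one direction to `n` directions. -/
def finSumUnitEquiv (n : ℕ) : Fin n ⊕ Unit ≃ Fin (n + 1) :=
  (Equiv.sumCongr (Equiv.refl _) (Equiv.ofUnique Unit (Fin 1))).trans finSumFinEquiv

lemma exists_fin_subspace_avg_le_add (α : Type*) [Finite α] [Nonempty α] (n : ℕ) :
    ∀ ε > (0 : ℝ), ∃ (ι : Type) (_ : Finite ι), ∀ f : (ι → Option α) → ℝ,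
      (∀ x, 0 ≤ f x) → (∀ x, f x ≤ 1) → ∃ φ : Combinatorics.Subspace (Fin n) (Option α) ι,
        avg f ≤ (avg fun x : Fin n → α => f (φ (some ∘ x))) + ε := by
  induction n with
  | zero =>
    refine fun ε hε => ⟨Empty, inferInstance, fun f _ _ => ⟨⟨isEmptyElim, isEmptyElim⟩, ?_⟩⟩
    obtain ⟨x, hx⟩ := exists_avg_le f
    exact hx.trans ((le_avg fun y => (congrArg f (Subsingleton.elim x _)).le).trans
      (le_add_of_nonneg_right hε.le))
  | succ n ih =>
    intro ε hε
    obtain ⟨ι₁, hι₁, h₁⟩ := ih (ε / 2) (half_pos hε)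
    obtain ⟨ι₂, hι₂, h₂⟩ := exists_line_avg_le_add α (half_pos hε)
    refine ⟨ι₁ ⊕ ι₂, inferInstance, fun f hf₀ hf₁ => ?_⟩
    obtain ⟨φ₁, hφ₁⟩ := h₁ (fun x => avg fun y => f (Sum.elim x y))
      (fun x => avg_nonneg fun y => hf₀ _) fun x => avg_le zero_le_one fun y => hf₁ _
    obtain ⟨φ₂, hφ₂⟩ := h₂ (fun y => avg fun x : Fin n → α => f (Sum.elim (φ₁ (some ∘ x)) y))
      (fun y => avg_nonneg fun x => hf₀ _) fun y => avg_le zero_le_one fun x => hf₁ _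
    refine ⟨(subspaceProd φ₁ φ₂).reindex (finSumUnitEquiv n) (Equiv.refl _) (Equiv.refl _), ?_⟩
    have avg_reindex : (avg fun x : Fin (n + 1) → α => f
        ((subspaceProd φ₁ φ₂).reindex (finSumUnitEquiv n) (Equiv.refl _) (Equiv.refl _)
          (some ∘ x))) = avg fun a : α => avg fun x : Fin n → α =>
            f (Sum.elim (φ₁ (some ∘ x)) (φ₂ fun _ => some a)) := by
      rw [← avg_equiv ((finSumUnitEquiv n).arrowCongr (Equiv.refl α)), avg_sumElim, avg_comm,
        ← avg_equiv (Equiv.funUnique Unit α).symm]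
      simp only [reindex_directions_apply, subspaceProd_apply]
      congr! 7 with a x i
      · simp [Function.comp_def]
      · simp [Function.comp_def]
    have swap := avg_comm fun (x : Fin n → α) y => f (Sum.elim (φ₁ (some ∘ x)) y)
    rw [avg_reindex, avg_sumElim]
    linarith

lemma exists_subspace_avg_le_add (α η : Type*) [Finite α] [Nonempty α] [Finite η] {ε : ℝ}
    (hε : 0 < ε) : ∃ (ι : Type) (_ : Finite ι), ∀ f : (ι → Option α) → ℝ,
      (∀ x, 0 ≤ f x) → (∀ x, f x ≤ 1) → ∃ φ : Combinatorics.Subspace η (Option α) ι,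
        avg f ≤ (avg fun x : η → α => f (φ (some ∘ x))) + ε := by
  obtain ⟨ι, hι, h⟩ := exists_fin_subspace_avg_le_add α (Nat.card η) ε hε
  refine ⟨ι, hι, fun f hf₀ hf₁ => ?_⟩
  obtain ⟨φ, hφ⟩ := h f hf₀ hf₁
  refine ⟨φ.reindex (Finite.equivFin η).symm (Equiv.refl _) (Equiv.refl _), ?_⟩
  rw [← avg_equiv ((Finite.equivFin η).symm.arrowCongr (Equiv.refl α))]
  simpa [reindex_directions_apply, Function.comp_def] using hφ

end RestrictedAlphabet

section DensityHalesJewett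

variable {β ι κ η : Type*}

/-- In some finite dimension, every set of words over `α` of density at least `δ` contains a
combinatorial line. -/
def ForcesLine (α : Type*) [Finite α] (δ : ℝ) : Prop :=
  ∃ (ι : Type) (_ : Finite ι), ∀ A : Set (ι → α), δ ≤ density A →
    ∃ l : Combinatorics.Line α ι, ∀ a, l a ∈ A

/-- The density Hales–Jewett property of the alphabet `α`: every positive density forces a
combinatorial line. -/
def DensityHJ (α : Type*) [Finite α] : Prop :=
  ∀ δ > (0 : ℝ), ForcesLine α δ

lemma exists_subspace_le_density_fiber [Finite β] [Nonempty β] [Finite ι] [Finite κ] [Finite η]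
    {P : Set (ι ⊕ κ → β)} {b : ℝ} (hb : 0 < b) (hP : 2 * b ≤ density P)
    (h : ∀ y, b ≤ density {x : ι → β | Sum.elim x y ∈ P} →
      ∃ φ : Combinatorics.Subspace η β ι, ∀ x, Sum.elim (φ x) y ∈ P) :
    ∃ φ : Combinatorics.Subspace η β ι,
      b / Nat.card (Combinatorics.Subspace η β ι) ≤
        density {y : κ → β | ∀ x, Sum.elim (φ x) y ∈ P} := by
  rw [density_sumElim_comm] at hP
  refine exists_div_card_le_density hb
    ((le_density_of_two_mul_le_avg hb.le (fun y => density_le_one _) hP).trans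
      (density_mono fun y hy => ?_))
  exact Set.mem_iUnion.2 (h y hy)

lemma DensityHJ.exists_fin_subspace {α : Type*} [Finite α] [Nonempty α] (hα : DensityHJ α) (n : ℕ) :
    ∀ δ > (0 : ℝ), ∃ (ι : Type) (_ : Finite ι), ∀ A : Set (ι → α), δ ≤ density A →
      ∃ φ : Combinatorics.Subspace (Fin n) α ι, ∀ x, φ x ∈ A := by
  induction n with
  | zero =>
    refine fun δ hδ => ⟨Empty, inferInstance, fun A hA => ⟨⟨isEmptyElim, isEmptyElim⟩, fun x => ?_⟩⟩
    obtain ⟨y, hy⟩ := nonempty_of_density_pos (hδ.trans_le hA)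
    rwa [Subsingleton.elim y] at hy
  | succ n ih =>
    intro δ hδ
    obtain ⟨ι₁, hι₁, h₁⟩ := ih (δ / 2) (half_pos hδ)
    obtain ⟨ι₂, hι₂, h₂⟩ :=
      hα (δ / 2 / (Nat.card (Combinatorics.Subspace (Fin n) α ι₁) + 1)) (by positivity)
    refine ⟨ι₁ ⊕ ι₂, inferInstance, fun A hA => ?_⟩
    obtain ⟨φ, hφ⟩ := exists_subspace_le_density_fiber (P := A) (half_pos hδ) (by linarith)
      fun y hy => h₁ {x | Sum.elim x y ∈ A} hy
    have card_pos : 0 < Nat.card (Combinatorics.Subspace (Fin n) α ι₁) :=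
      have : Nonempty (Combinatorics.Subspace (Fin n) α ι₁) := ⟨φ⟩
      Nat.card_pos
    obtain ⟨l, hl⟩ := h₂ _ (le_trans (by gcongr; linarith) hφ)
    refine ⟨(subspaceProd φ l.toSubspaceUnit).reindex (finSumUnitEquiv n) (Equiv.refl _)
      (Equiv.refl _), fun x => ?_⟩
    rw [reindex_directions_apply, subspaceProd_apply, Combinatorics.Line.toSubspaceUnit_apply]
    exact hl _ _

lemma DensityHJ.exists_subspace {α : Type*} [Finite α] [Nonempty α] (hα : DensityHJ α)
    (η : Type*) [Finite η] {δ : ℝ} (hδ : 0 < δ) :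
    ∃ (ι : Type) (_ : Finite ι), ∀ A : Set (ι → α), δ ≤ density A →
      ∃ φ : Combinatorics.Subspace η α ι, ∀ x, φ x ∈ A := by
  obtain ⟨ι, hι, h⟩ := hα.exists_fin_subspace (Nat.card η) δ hδ
  refine ⟨ι, hι, fun A hA => ?_⟩
  obtain ⟨φ, hφ⟩ := h A hA
  refine ⟨φ.reindex (Finite.equivFin η).symm (Equiv.refl _) (Equiv.refl _), fun x => ?_⟩
  rw [reindex_directions_apply]
  exact hφ _

lemma DensityHJ.exists_restricted_subspace {α : Type*} [Finite α] [Nonempty α] (hα : DensityHJ α)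
    (η : Type*) [Finite η] {δ : ℝ} (hδ : 0 < δ) :
    ∃ (ι : Type) (_ : Finite ι), ∀ P : Set (ι → Option α), δ ≤ density P →
      ∃ φ : Combinatorics.Subspace η (Option α) ι, ∀ x : η → α, φ (some ∘ x) ∈ P := by
  obtain ⟨κ, hκ, h₁⟩ := hα.exists_subspace η (half_pos hδ)
  obtain ⟨ι, hι, h₂⟩ := exists_subspace_avg_le_add α κ (half_pos hδ)
  refine ⟨ι, hι, fun P hP => ?_⟩
  obtain ⟨φ, hφ⟩ := h₂ (P.indicator 1) (Set.indicator_nonneg fun _ _ => zero_le_one)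
    (Set.indicator_le_self' fun _ _ => zero_le_one)
  have half_le_density : δ / 2 ≤ density {x : κ → α | φ (some ∘ x) ∈ P} := by
    change δ ≤ avg _ at hP
    change δ / 2 ≤ avg fun x : κ → α => P.indicator 1 (φ (some ∘ x))
    linarith
  obtain ⟨ψ, hψ⟩ := h₁ _ half_le_density
  refine ⟨subspaceComp φ (subspaceMap some ψ), fun x => ?_⟩
  rw [subspaceComp_apply, subspaceMap_apply]
  exact hψ x

end DensityHalesJewett

section InsensitiveSets

variable {α ι κ η : Type*}

/-- The word obtained by replacing every letter `none` by `some a`. -/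
def collapse (a : α) (x : ι → Option α) : ι → Option α :=
  fun i => some ((x i).getD a)

/-- A set of words over `Option α` is insensitive if exchanging letters `none` and `some a` does
not affect membership. -/
def Insensitive (a : α) (P : Set (ι → Option α)) : Prop :=
  ∀ x, x ∈ P ↔ collapse a x ∈ P

lemma Insensitive.mem_congr {a : α} {P : Set (ι → Option α)} (hP : Insensitive a P)
    {x y : ι → Option α} (h : ∀ i, (x i).getD a = (y i).getD a) : x ∈ P ↔ y ∈ P := by
  have : collapse a x = collapse a y := funext fun i => congrArg some (h i)
  rw [hP x, this, ← hP y]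

lemma insensitive_collapse_preimage (a : α) (P : Set (ι → Option α)) :
    Insensitive a {x | collapse a x ∈ P} :=
  fun _ => Iff.rfl

lemma Insensitive.preimage_subspace {a : α} {P : Set (ι → Option α)} (hP : Insensitive a P)
    (φ : Combinatorics.Subspace η (Option α) ι) : Insensitive a {x | φ x ∈ P} := by
  refine fun x => hP.mem_congr fun i => ?_
  cases h : φ.idxFun i <;> simp [Combinatorics.Subspace.coe_apply, collapse, h]

lemma Insensitive.right_fiber {a : α} {P : Set (ι ⊕ κ → Option α)} (hP : Insensitive a P)
    (x : ι → Option α) : Insensitive a {y | Sum.elim x y ∈ P} :=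
  fun y => hP.mem_congr fun i => by cases i <;> rfl

lemma Insensitive.left_fiber {a : α} {P : Set (ι ⊕ κ → Option α)} (hP : Insensitive a P)
    (y : κ → Option α) : Insensitive a {x | Sum.elim x y ∈ P} :=
  fun x => hP.mem_congr fun i => by cases i <;> rfl

lemma Insensitive.compl {a : α} {P : Set (ι → Option α)} (hP : Insensitive a P) :
    Insensitive a Pᶜ :=
  fun x => not_congr (hP x)

lemma DensityHJ.exists_subspace_of_insensitive {α : Type*} [Finite α] [Nonempty α]
    (hα : DensityHJ α) (η : Type*) [Finite η] {δ : ℝ} (hδ : 0 < δ) :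
    ∃ (ι : Type) (_ : Finite ι), ∀ (a : α) (P : Set (ι → Option α)), Insensitive a P →
      δ ≤ density P → ∃ φ : Combinatorics.Subspace η (Option α) ι, ∀ x, φ x ∈ P := by
  obtain ⟨ι, hι, h⟩ := hα.exists_restricted_subspace η hδ
  refine ⟨ι, hι, fun a P hP hPδ => ?_⟩
  obtain ⟨φ, hφ⟩ := h P hPδ
  exact ⟨φ, fun x => (hP.preimage_subspace φ x).2 (hφ fun i => (x i).getD a)⟩

end InsensitiveSets

section AlmostTiling

variable {α β ι κ η : Type*}

/-- The function `g` has nonpositive average over each `η`-dimensional subspace contained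
in `P`. -/
def SubspaceNonpos [Finite β] (η : Type*) [Finite η] (P : Set (ι → β)) (g : (ι → β) → ℝ) : Prop :=
  ∀ φ : Combinatorics.Subspace η β ι, (∀ x, φ x ∈ P) → avg (fun x => g (φ x)) ≤ 0

/-- The set `P` is the disjoint union of `η`-dimensional subspaces up to an error `ε`. Only the
following consequence is recorded: a function bounded by `1` which has nonpositive averages over
the subspaces contained in `P` has average at most `ε` over `P`. -/
def AlmostTiled [Finite β] [Finite ι] (η : Type*) [Finite η] (P : Set (ι → β)) (ε : ℝ) : Prop :=
  ∀ g : (ι → β) → ℝ, (∀ x, g x ≤ 1) → SubspaceNonpos η P g → avg (P.indicator g) ≤ ε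

lemma SubspaceNonpos.mono [Finite β] [Finite η] {P Q : Set (ι → β)} {g : (ι → β) → ℝ}
    (hg : SubspaceNonpos η P g) (hQP : Q ⊆ P) : SubspaceNonpos η Q g :=
  fun φ hφ => hg φ fun x => hQP (hφ x)

lemma SubspaceNonpos.right_fiber [Finite β] [Finite η] {P : Set (ι ⊕ κ → β)}
    {g : (ι ⊕ κ → β) → ℝ} (hg : SubspaceNonpos η P g) (x : ι → β) :
    SubspaceNonpos η {y | Sum.elim x y ∈ P} fun y => g (Sum.elim x y) := fun ψ hψ => by
  simpa only [subspaceFixLeft_apply] using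
    hg (subspaceFixLeft x ψ) fun z => (subspaceFixLeft_apply x ψ z).symm ▸ hψ z

lemma avg_indicator_le_density {X : Type*} [Finite X] {g : X → ℝ} (hg : ∀ x, g x ≤ 1)
    (P : Set X) : avg (P.indicator g) ≤ density P :=
  avg_mono fun x => Set.indicator_le_indicator (hg x)

lemma avg_indicator_range_nonpos {X Y : Type*} [Finite X] [Finite Y] {e : X → Y}
    (he : Function.Injective e) {g : Y → ℝ} (hg : avg (fun x => g (e x)) ≤ 0) :
    avg ((Set.range e).indicator g) ≤ 0 := by
  classical
  have := Fintype.ofFinite X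
  have := Fintype.ofFinite Y
  have sum_range : ∑ y, (Set.range e).indicator g y = ∑ x, g (e x) := by
    rw [← Finset.sum_image (s := univ) (g := e) (f := g) he.injOn,
      ← Finset.sum_indicator_subset g (univ.image e).subset_univ]
    simp
  have sum_eq : ∑ x, g (e x) = Fintype.card X * avg fun x => g (e x) := by
    rw [avg_eq_expect, Fintype.card_mul_expect]
  rw [avg_eq_expect, Fintype.expect_eq_sum_div_card, sum_range, sum_eq]
  exact div_nonpos_of_nonpos_of_nonneg (mul_nonpos_of_nonneg_of_nonpos (Nat.cast_nonneg _) hg)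
    (Nat.cast_nonneg _)

/-- The words whose left part lies in the subspace `φ` and whose right part lies in `Z`. -/
def subspaceBox (φ : Combinatorics.Subspace η β ι) (Z : Set (κ → β)) : Set (ι ⊕ κ → β) :=
  {v | v ∘ Sum.inl ∈ Set.range φ ∧ v ∘ Sum.inr ∈ Z}

lemma le_density_subspaceBox [Finite β] [Nonempty β] [Finite ι] [Finite κ]
    (φ : Combinatorics.Subspace η β ι) (Z : Set (κ → β)) :
    density Z / Nat.card (ι → β) ≤ density (subspaceBox φ Z) := by
  have density_fiber (x : ι → β) :
      density {y : κ → β | Sum.elim x y ∈ subspaceBox φ Z}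
        = density Z * (Set.range φ).indicator 1 x := by
    by_cases hx : x ∈ Set.range φ
    · simp only [subspaceBox, Set.mem_ofPred_eq, Sum.elim_comp_inl, Sum.elim_comp_inr, hx, true_and,
        Set.ofPred_mem_eq, Set.indicator_of_mem, Pi.one_apply, mul_one]
    · have fiber_empty : {y : κ → β | Sum.elim x y ∈ subspaceBox φ Z} = ∅ :=
        Set.eq_empty_of_forall_notMem fun y hy => hx hy.1
      rw [fiber_empty, Set.indicator_of_notMem hx, mul_zero, density, Set.indicator_empty]
      exact avg_const 0
  simp only [density_sumElim, density_fiber, avg_const_mul, div_eq_mul_inv]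
  exact mul_le_mul_of_nonneg_left (inv_card_le_density (Set.range_nonempty _)) (density_nonneg _)

lemma SubspaceNonpos.avg_indicator_subspaceBox_nonpos [Finite β] [Finite ι] [Finite κ] [Finite η]
    {P : Set (ι ⊕ κ → β)} {g : (ι ⊕ κ → β) → ℝ} (hg : SubspaceNonpos η P g)
    {φ : Combinatorics.Subspace η β ι} {Z : Set (κ → β)}
    (hZ : ∀ y ∈ Z, ∀ x, Sum.elim (φ x) y ∈ P) : avg ((subspaceBox φ Z).indicator g) ≤ 0 := by
  rw [avg_sumElim, avg_comm]
  refine avg_nonpos fun y => ?_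
  by_cases hy : y ∈ Z
  · have fiber : avg (fun x => g (Sum.elim (φ x) y)) ≤ 0 := by
      simpa only [subspaceFixRight_apply] using
        hg (subspaceFixRight φ y) fun x => by simpa only [subspaceFixRight_apply] using hZ y hy x
    refine Eq.trans_le ?_ (avg_indicator_range_nonpos (subspace_injective φ)
      (g := fun x => g (Sum.elim x y)) fiber)
    exact congrArg avg (funext fun x => Set.indicator_eq_indicator (and_iff_left hy) rfl)
  · exact avg_nonpos fun x => by simp [subspaceBox, hy]

lemma Insensitive.sdiff_subspaceBox_right_fiber {a : α} {P : Set (ι ⊕ κ → Option α)}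
    (hP : Insensitive a P) (φ : Combinatorics.Subspace η (Option α) ι) (x : ι → Option α) :
    Insensitive a {y | Sum.elim x y ∈ P \ subspaceBox φ {y | ∀ z, Sum.elim (φ z) y ∈ P}} := by
  intro y
  exact and_congr (hP.right_fiber x y)
    (not_congr (and_congr Iff.rfl (forall_congr' fun z => hP.right_fiber (φ z) y)))

lemma SubspaceNonpos.avg_indicator_le_of_sdiff [Finite β] [Nonempty β] [Finite ι] [Finite κ]
    [Finite η] {P T : Set (ι ⊕ κ → β)} {g : (ι ⊕ κ → β) → ℝ} (hg₁ : ∀ x, g x ≤ 1)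
    (hg : SubspaceNonpos η P g) (hTP : T ⊆ P) (hT : avg (T.indicator g) ≤ 0) {ε c ζ : ℝ}
    (hc : 0 ≤ c) (hζ : 0 ≤ ζ) (hζT : ζ ≤ density T)
    (h : ∀ x, AlmostTiled η {y | Sum.elim x y ∈ P \ T}
      (ε + c * density {y | Sum.elim x y ∈ P \ T})) :
    avg (P.indicator g) ≤ ε + c * (1 - ζ) * density P := by
  have split (f : (ι ⊕ κ → β) → ℝ) :
      avg (P.indicator f) = avg (T.indicator f) + avg ((P \ T).indicator f) := by
    rw [← avg_add]
    refine congrArg avg (funext fun v => ?_)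
    rw [Set.indicator_sdiff hTP, Pi.sub_apply, add_sub_cancel]
  have diff_le : avg ((P \ T).indicator g) ≤ ε + c * density (P \ T) := by
    calc avg ((P \ T).indicator g)
        = avg fun x => avg fun y => (P \ T).indicator g (Sum.elim x y) := avg_sumElim _
      _ ≤ avg fun x : ι → β => ε + c * density {y | Sum.elim x y ∈ P \ T} :=
        avg_mono fun x => h x _ (fun y => hg₁ _) ((hg.mono Set.sdiff_subset).right_fiber x)
      _ = ε + c * density (P \ T) := by
        rw [avg_add, avg_const, avg_const_mul, density_sumElim]
  have density_diff : density (P \ T) ≤ (1 - ζ) * density P := by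
    have : density P = density T + density (P \ T) := split 1
    nlinarith [density_le_one P]
  rw [split, mul_assoc]
  linarith [mul_le_mul_of_nonneg_left density_diff hc]

lemma DensityHJ.exists_almostTiled_pow {α : Type*} [Finite α] [Nonempty α]
    (hα : DensityHJ α) (a : α) (η : Type*) [Finite η] {ε : ℝ} (hε : 0 < ε) :
    ∃ ζ : ℝ, 0 < ζ ∧ ζ ≤ 1 ∧ ∀ t : ℕ, ∃ (ι : Type) (_ : Finite ι),
      ∀ P : Set (ι → Option α), Insensitive a P →
        AlmostTiled η P (ε + (1 - ζ) ^ t * density P) := by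
  obtain ⟨ι₀, hι₀, h₀⟩ := hα.exists_subspace_of_insensitive η (half_pos hε)
  set ζ : ℝ := min 1 (ε / 2 / (Nat.card (Combinatorics.Subspace η (Option α) ι₀) + 1) /
    Nat.card (ι₀ → Option α))
  have card_pos : (0 : ℝ) < Nat.card (ι₀ → Option α) := by exact_mod_cast Nat.card_pos
  have ζ_pos : 0 < ζ := by positivity
  have ζ_le : ζ ≤ 1 := min_le_left _ _
  refine ⟨ζ, ζ_pos, ζ_le, fun t => ?_⟩
  have pow_nonneg (t : ℕ) : 0 ≤ (1 - ζ) ^ t := pow_nonneg (sub_nonneg.2 ζ_le) t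
  induction t with
  | zero =>
    refine ⟨Empty, inferInstance, fun P _ g hg _ => (avg_indicator_le_density hg P).trans ?_⟩
    rw [pow_zero, one_mul]
    exact le_add_of_nonneg_left hε.le
  | succ t ih =>
    obtain ⟨κ, hκ, ih⟩ := ih
    refine ⟨ι₀ ⊕ κ, inferInstance, fun P hP g hg₁ hg => ?_⟩
    rcases le_total (density P) ε with hPε | hPε
    · exact ((avg_indicator_le_density hg₁ P).trans hPε).trans
        (le_add_of_nonneg_right (mul_nonneg (pow_nonneg _) (density_nonneg P)))
    obtain ⟨φ, hφ⟩ := exists_subspace_le_density_fiber (P := P) (half_pos hε) (by linarith)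
      fun y hy => h₀ a _ (hP.left_fiber y) hy
    rw [pow_succ]
    refine hg.avg_indicator_le_of_sdiff (T := subspaceBox φ _) hg₁ ?_
      (hg.avg_indicator_subspaceBox_nonpos fun y hy => hy) (pow_nonneg t) ζ_pos.le ?_
      fun x => ih _ (hP.sdiff_subspaceBox_right_fiber φ x)
    · rintro v ⟨⟨z, hz⟩, hv⟩
      rw [← Sum.elim_comp_inl_inr v, ← hz]
      exact hv z
    · refine (min_le_right _ _).trans (le_trans ?_ (le_density_subspaceBox φ _))
      refine div_le_div_of_nonneg_right (le_trans ?_ hφ) card_pos.le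
      have : Nonempty (Combinatorics.Subspace η (Option α) ι₀) := ⟨φ⟩
      have : 0 < Nat.card (Combinatorics.Subspace η (Option α) ι₀) := Nat.card_pos
      gcongr
      exact le_add_of_nonneg_right zero_le_one

lemma DensityHJ.exists_almostTiled {α : Type*} [Finite α] [Nonempty α]
    (hα : DensityHJ α) (a : α) (η : Type*) [Finite η] {ε : ℝ} (hε : 0 < ε) :
    ∃ (ι : Type) (_ : Finite ι), ∀ P : Set (ι → Option α), Insensitive a P →
      AlmostTiled η P ε := by
  obtain ⟨ζ, ζ_pos, ζ_le, h⟩ := hα.exists_almostTiled_pow a η (half_pos hε)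
  obtain ⟨t, ht⟩ := exists_pow_lt_of_lt_one (half_pos hε) (show 1 - ζ < 1 by linarith)
  obtain ⟨ι, hι, h⟩ := h t
  refine ⟨ι, hι, fun P hP g hg₁ hg => (h P hP g hg₁ hg).trans ?_⟩
  nlinarith [density_le_one P, pow_nonneg (sub_nonneg.2 ζ_le) t]

lemma almostTiled_univ [Finite β] [Nonempty β] [Finite η] [Finite κ] {ε : ℝ} (hε : 0 ≤ ε) :
    AlmostTiled η (Set.univ : Set (η ⊕ κ → β)) ε := by
  intro g _ hg
  rw [Set.indicator_univ, avg_sumElim, avg_comm]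
  refine avg_le hε fun y => ?_
  have := hg (subspaceFixRight default y) fun _ => Set.mem_univ _
  simp only [subspaceFixRight_apply] at this
  exact this.trans hε

lemma AlmostTiled.inter [Finite β] [Nonempty β] [Finite ι] [Finite κ] [Finite η]
    {P Q : Set (ι → β)} {ε δ : ℝ} (hδ : 0 ≤ δ) (hQ : AlmostTiled κ Q ε)
    (hP : ∀ φ : Combinatorics.Subspace κ β ι, AlmostTiled η {x | φ x ∈ P} δ) :
    AlmostTiled η (P ∩ Q) (ε + δ) := by
  intro g hg₁ hg
  have indicator_le (x : ι → β) : P.indicator g x - δ ≤ 1 := by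
    by_cases hx : x ∈ P
    · rw [Set.indicator_of_mem hx]; linarith [hg₁ x]
    · rw [Set.indicator_of_notMem hx]; linarith
  have subspace_nonpos : SubspaceNonpos κ Q fun x => P.indicator g x - δ := by
    intro φ hφ
    rw [avg_sub, avg_const, sub_nonpos]
    refine hP φ (fun x => g (φ x)) (fun x => hg₁ _) fun ψ hψ => ?_
    simpa only [subspaceComp_apply] using hg (subspaceComp φ ψ) fun x => by
      rw [subspaceComp_apply]
      exact ⟨hψ x, hφ _⟩
  calc avg ((P ∩ Q).indicator g)
      ≤ avg fun x => Q.indicator (fun x => P.indicator g x - δ) x + δ := by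
        refine avg_mono fun x => ?_
        rw [Set.inter_comm, ← Set.indicator_indicator]
        by_cases hx : x ∈ Q
        · simp only [Set.indicator_of_mem hx, sub_add_cancel, le_refl]
        · simpa only [Set.indicator_of_notMem hx, zero_add] using hδ
    _ ≤ ε + δ := by
        rw [avg_add, avg_const]
        exact add_le_add_left (hQ _ indicator_le subspace_nonpos) δ

lemma DensityHJ.exists_almostTiled_biInter {α : Type*} [Finite α] [Nonempty α]
    (hα : DensityHJ α) (L : ℕ) (S : Finset α) : ∀ (η : Type) [Finite η], ∀ ε > (0 : ℝ),
      ∃ (ι : Type) (_ : Finite ι), L ≤ Nat.card ι ∧ ∀ P : α → Set (ι → Option α),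
        (∀ a, Insensitive a (P a)) → AlmostTiled η (⋂ a ∈ S, P a) ε := by
  classical
  induction S using Finset.induction_on with
  | empty =>
    refine fun η _ ε hε => ⟨η ⊕ Fin L, inferInstance, by simp, fun P _ => ?_⟩
    simpa using almostTiled_univ hε.le
  | insert a S _ ih =>
    intro η _ ε hε
    obtain ⟨κ, hκ, h₁⟩ := hα.exists_almostTiled a η (half_pos hε)
    obtain ⟨ι, hι, hL, h₂⟩ := ih κ (ε / 2) (half_pos hε)
    refine ⟨ι, hι, hL, fun P hP => ?_⟩
    rw [Finset.set_biInter_insert, ← add_halves ε]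
    exact (h₂ P hP).inter (half_pos hε).le fun φ => h₁ _ ((hP a).preimage_subspace φ)

end AlmostTiling

section DensityIncrement

variable {α β ι κ η F : Type*}

/-- The set `A` contains no combinatorial line. -/
def LineFree (A : Set (ι → β)) : Prop :=
  ∀ l : Combinatorics.Line β ι, ∃ a, l a ∉ A

lemma ForcesLine.exists_density_le [Finite β] {δ : ℝ} (h : ForcesLine β δ) :
    ∃ (ι : Type) (_ : Finite ι), ∀ A : Set (ι → β), LineFree A → density A ≤ δ := by
  obtain ⟨ι, hι, h⟩ := h
  refine ⟨ι, hι, fun A hA => le_of_not_ge fun hδ => ?_⟩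
  obtain ⟨l, hl⟩ := h A hδ
  obtain ⟨a, ha⟩ := hA l
  exact ha (hl a)

lemma LineFree.preimage_subspace {A : Set (ι → β)} (hA : LineFree A)
    (φ : Combinatorics.Subspace η β ι) : LineFree {x | φ x ∈ A} := fun l => by
  obtain ⟨a, ha⟩ := hA (subspaceCompLine φ l)
  exact ⟨a, by rwa [subspaceCompLine_apply] at ha⟩

lemma LineFree.right_fiber {A : Set (ι ⊕ κ → β)} (hA : LineFree A) (x : ι → β) :
    LineFree {y | Sum.elim x y ∈ A} := fun l => by
  obtain ⟨a, ha⟩ := hA (l.vertical x)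
  exact ⟨a, by rwa [Combinatorics.Line.vertical_apply] at ha⟩

lemma LineFree.left_fiber {A : Set (ι ⊕ κ → β)} (hA : LineFree A) (y : κ → β) :
    LineFree {x | Sum.elim x y ∈ A} := fun l => by
  obtain ⟨a, ha⟩ := hA (l.horizontal y)
  exact ⟨a, by rwa [Combinatorics.Line.horizontal_apply] at ha⟩

lemma LineFree.ne_none_of_collapse_mem {A : Set (ι → Option α)} (hA : LineFree A)
    {x : ι → Option α} (hx : x ∈ A) (h : ∀ a, collapse a x ∈ A) (i : ι) : x i ≠ none := by
  intro hi
  let l : Combinatorics.Line (Option α) ι := ⟨fun i => (x i).map some, i, by simp [hi]⟩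
  obtain ⟨a, ha⟩ := hA l
  have l_apply (i : ι) : l a i = (x i).or a := by
    change ((x i).map some).getD a = _
    cases x i <;> rfl
  cases a with
  | none => exact ha (by convert hx using 1; ext1 i; rw [l_apply, Option.or_none])
  | some a =>
    refine ha ?_
    convert h a using 1
    ext1 i
    rw [l_apply, collapse]
    cases x i <;> rfl

lemma LineFree.subspaceNonpos [Finite β] [Nonempty β] [Finite η] {A : Set (ι → β)}
    (hA : LineFree A) {δ : ℝ} (hη : ∀ B : Set (η → β), LineFree B → density B ≤ δ)
    (P : Set (ι → β)) : SubspaceNonpos η P fun x => A.indicator 1 x - δ := fun φ _ => by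
  rw [avg_sub, avg_const, sub_nonpos]
  exact hη _ (hA.preimage_subspace φ)

lemma LineFree.le_density_right_fiber [Finite β] [Nonempty β] [Finite ι] [Finite κ]
    {A : Set (ι ⊕ κ → β)} (hA : LineFree A) {M c : ℝ}
    (hκ : ∀ B : Set (κ → β), LineFree B → density B ≤ M) (hc : c ≤ density A) (x : ι → β) :
    M - Nat.card (ι → β) * (M - c) ≤ density {y | Sum.elim x y ∈ A} :=
  sub_card_mul_le_of_le_avg (f := fun x => density {y : κ → β | Sum.elim x y ∈ A})
    (fun x => hκ _ (hA.right_fiber x)) (density_sumElim A ▸ hc) x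

lemma avg_indicator_compl_biInter_le [Finite α] [Finite η] [Finite ι] {ε : ℝ}
    (htiled : ∀ P : α → Set (ι → Option α), (∀ a, Insensitive a (P a)) →
      AlmostTiled η (⋂ a, P a) ε)
    {D : α → Set (ι → Option α)} (hD : ∀ a, Insensitive a (D a)) {g : (ι → Option α) → ℝ}
    (hg₁ : ∀ x, g x ≤ 1) (hg : SubspaceNonpos η Set.univ g) (S : Finset α) :
    avg ((⋂ a ∈ S, D a)ᶜ.indicator g) ≤ #S * ε := by
  classical
  induction S using Finset.induction_on with
  | empty =>
    rw [Finset.card_empty, Nat.cast_zero, zero_mul]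
    exact avg_nonpos fun x => by simp
  | insert a S ha ih =>
    let P : α → Set (ι → Option α) := fun b =>
      if b = a then (D a)ᶜ else if b ∈ S then D b else Set.univ
    have hP (b : α) : Insensitive b (P b) := by
      dsimp only [P]
      split_ifs with hb
      · exact hb ▸ (hD a).compl
      · exact hD b
      · exact fun _ => Iff.rfl
    have iInter_P : ⋂ b, P b = (D a)ᶜ ∩ ⋂ b ∈ S, D b := by
      ext x
      simp only [Set.mem_iInter, Set.mem_inter_iff, P]
      refine ⟨fun h => ⟨by simpa using h a, fun b hb => ?_⟩, fun h b => ?_⟩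
      · simpa [ne_of_mem_of_not_mem hb ha, hb] using h b
      · split_ifs with hba hb
        · exact h.1
        · exact h.2 b hb
        · trivial
    have split (x : ι → Option α) : (⋂ b ∈ insert a S, D b)ᶜ.indicator g x =
        (⋂ b ∈ S, D b)ᶜ.indicator g x + (⋂ b, P b).indicator g x := by
      rw [iInter_P, Finset.set_biInter_insert]
      by_cases hxa : x ∈ D a <;> by_cases hxS : x ∈ ⋂ b ∈ S, D b <;>
        simp only [Set.indicator, Set.mem_compl_iff, Set.mem_inter_iff, hxa, hxS, and_self,
          and_true, not_true_eq_false, not_false_eq_true, if_true, if_false, add_zero, zero_add,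
          and_false]
    rw [funext split, avg_add, Finset.card_insert_of_notMem ha, Nat.cast_succ, add_one_mul]
    exact add_le_add ih (htiled P hP g hg₁ fun φ _ => hg φ fun _ => Set.mem_univ _)

lemma LineFree.avg_indicator_collapse_compl_le [Finite α] [Finite η] [Finite F] {ε δ : ℝ}
    (hδ : 0 ≤ δ) (hη : ∀ B : Set (η → Option α), LineFree B → density B ≤ δ)
    (htiled : ∀ P : α → Set (F → Option α), (∀ a, Insensitive a (P a)) →
      AlmostTiled η (⋂ a, P a) ε)
    {A : Set (ι → Option α)} (hA : LineFree A) (φ : Combinatorics.Subspace F (Option α) ι) :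
    avg ({f | ∀ a, collapse a (φ f) ∈ A}ᶜ.indicator
      fun f => {f | φ f ∈ A}.indicator 1 f - δ) ≤ Nat.card α * ε := by
  have := Fintype.ofFinite α
  have := avg_indicator_compl_biInter_le htiled
    (D := fun a => {f | φ f ∈ {x | collapse a x ∈ A}})
    (fun a => (insensitive_collapse_preimage a A).preimage_subspace φ)
    (fun f => (sub_le_self _ hδ).trans (Set.indicator_le_self' (fun _ _ => zero_le_one) f))
    ((hA.preimage_subspace φ).subspaceNonpos hη _) Finset.univ
  rw [Finset.card_univ, ← Nat.card_eq_fintype_card] at this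
  have iInter_eq : {f | ∀ a, collapse a (φ f) ∈ A} =
      ⋂ a ∈ Finset.univ, {f | φ f ∈ {x | collapse a x ∈ A}} := by
    ext f
    simp
  rwa [iInter_eq]

lemma LineFree.density_add_density_collapse_le [Finite α] [Finite η] [Finite F] {ε δ : ℝ}
    (hδ : 0 ≤ δ) (hη : ∀ B : Set (η → Option α), LineFree B → density B ≤ δ)
    (htiled : ∀ P : α → Set (F → Option α), (∀ a, Insensitive a (P a)) →
      AlmostTiled η (⋂ a, P a) ε)
    {A : Set (ι → Option α)} (hA : LineFree A) (φ : Combinatorics.Subspace F (Option α) ι) :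
    density {f | φ f ∈ A} + δ * density {f | ∀ a, collapse a (φ f) ∈ A} ≤
      δ + Nat.card α * ε + density {f : F → Option α | ∀ i, f i ≠ none} := by
  set B : Set (F → Option α) := {f | φ f ∈ A}
  set C : Set (F → Option α) := {f | ∀ a, collapse a (φ f) ∈ A}
  set N : Set (F → Option α) := {f | ∀ i, f i ≠ none}
  have mem_N (f) (hB : f ∈ B) (hC : f ∈ C) : f ∈ N := fun i => by
    obtain ⟨j, hj⟩ := φ.proper i
    have : φ f j = f i := φ.apply_inr hj
    exact this ▸ hA.ne_none_of_collapse_mem hB hC j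
  have indicator_nonneg (f) : 0 ≤ N.indicator (1 : (F → Option α) → ℝ) f :=
    Set.indicator_nonneg (fun _ _ => zero_le_one) f
  have pointwise (f : F → Option α) : B.indicator 1 f + δ * C.indicator 1 f ≤
      δ + Cᶜ.indicator (fun f => B.indicator 1 f - δ) f + N.indicator 1 f := by
    by_cases hC : f ∈ C
    · have hC' : f ∉ Cᶜ := not_not.2 hC
      have : B.indicator (1 : (F → Option α) → ℝ) f ≤ N.indicator 1 f := by
        by_cases hB : f ∈ B
        · rw [Set.indicator_of_mem hB, Set.indicator_of_mem (mem_N f hB hC)]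
        · exact (Set.indicator_of_notMem hB _).trans_le (indicator_nonneg f)
      rw [Set.indicator_of_mem hC, Set.indicator_of_notMem hC', Pi.one_apply]
      linarith
    · have hC' : f ∈ Cᶜ := hC
      rw [Set.indicator_of_notMem hC, Set.indicator_of_mem hC']
      linarith [indicator_nonneg f]
  have := avg_mono pointwise
  rw [avg_add, avg_add, avg_add, avg_const, avg_const_mul] at this
  change density B + δ * density C ≤ δ + avg _ + density N at this
  linarith [hA.avg_indicator_collapse_compl_le hδ hη htiled φ]

end DensityIncrement

section FilledBlocks

variable {α J F R : Type*}

/-- The word obtained from a frame `t` on `J × F` by filling the letters `none` of its `j`-th block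
with the letter `v j`. -/
def fill (t : J × F → Option α) (v : J → Option α) : J × F → Option α :=
  fun p => (t p).or (v p.1)

lemma collapse_fill (a : α) (t : J × F → Option α) (v : J → Option α) :
    collapse a (fill t v) = fill t (collapse a v) := by
  ext1 p
  unfold collapse fill
  cases t p <;> rfl

/-- The subspace of words on `J × F` that agree with `w` outside the `j`-th block. -/
def blockSubspace [DecidableEq J] (j : J) (w : J × F → α) : Combinatorics.Subspace F α (J × F) where
  idxFun p := if p.1 = j then Sum.inr p.2 else Sum.inl (w p)
  proper f := ⟨(j, f), if_pos rfl⟩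

lemma blockSubspace_apply [DecidableEq J] (j : J) (w : J × F → α) (f : F → α) (p : J × F) :
    blockSubspace j w f p = if p.1 = j then f p.2 else w p := by
  simp only [Combinatorics.Subspace.coe_apply, blockSubspace]
  split_ifs <;> rfl

variable [Finite α] [Finite J] [Finite F] [Finite R]

lemma avg_fill [DecidableEq J] {s : J → Option α} {j : J} (hj : s j = none)
    (H : (J × F → Option α) → ℝ) :
    (avg fun t => H (fill t s)) = avg fun t => avg fun f => H (blockSubspace j (fill t s) f) := by
  have fill_update (t : J → F → Option α) (f : F → Option α) :
      fill ((Equiv.curry J F _).symm (Function.update t j f)) s =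
        blockSubspace j (fill ((Equiv.curry J F _).symm t) s) f := by
    ext1 p
    rw [blockSubspace_apply]
    by_cases hp : p.1 = j
    · simp [fill, Function.uncurry, hp, hj]
    · simp [fill, Function.uncurry, hp]
  rw [← avg_equiv (Equiv.curry J F (Option α)).symm, avg_update j,
    ← avg_equiv (Equiv.curry J F (Option α)).symm]
  simp only [fill_update]

lemma LineFree.avg_fill_le {η : Type*} [Finite η] {ε δ : ℝ} (hδ : 0 ≤ δ)
    (hη : ∀ B : Set (η → Option α), LineFree B → density B ≤ δ)
    (htiled : ∀ P : α → Set (F → Option α), (∀ a, Insensitive a (P a)) →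
      AlmostTiled η (⋂ a, P a) ε)
    {A : Set (J × F ⊕ R → Option α)} (hA : LineFree A) {s : J → Option α} {j : J}
    (hj : s j = none) :
    (avg fun t => density {z | Sum.elim (fill t s) z ∈ A} +
        δ * density {z | ∀ a, Sum.elim (collapse a (fill t s)) z ∈ A}) ≤
      δ + Nat.card α * ε + density {f : F → Option α | ∀ i, f i ≠ none} := by
  classical
  rw [avg_fill hj fun y => density {z | Sum.elim y z ∈ A} +
    δ * density {z | ∀ a, Sum.elim (collapse a y) z ∈ A}]
  refine (avg_mono fun t => ?_).trans_eq (avg_const _)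
  set φ := blockSubspace j (fill t s)
  calc
    _ = avg fun z => density {f | φ f ∈ {x | Sum.elim x z ∈ A}} +
          δ * density {f | ∀ a, collapse a (φ f) ∈ {x | Sum.elim x z ∈ A}} := by
      simp only [avg_add, avg_const_mul]
      congr 1
      · exact avg_comm fun f z => {z | Sum.elim (φ f) z ∈ A}.indicator (1 : (R → Option α) → ℝ) z
      · congr 1
        exact avg_comm fun f z =>
          {z | ∀ a, Sum.elim (collapse a (φ f)) z ∈ A}.indicator (1 : (R → Option α) → ℝ) z
    _ ≤ avg fun _ => δ + Nat.card α * ε + density {f : F → Option α | ∀ i, f i ≠ none} :=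
      avg_mono fun z => (hA.left_fiber z).density_add_density_collapse_le hδ hη htiled φ
    _ = _ := avg_const _

lemma exists_line_div_card_le_avg_fill [Nonempty α] {b : ℝ} (hb : 0 < b)
    (hJ : ∀ B : Set (J → α), b ≤ density B → ∃ l : Combinatorics.Line α J, ∀ a, l a ∈ B)
    {A : Set (J × F ⊕ R → Option α)} (hA : ∀ y, 2 * b ≤ density {z | Sum.elim y z ∈ A}) :
    ∃ l : Combinatorics.Line α J, b / Nat.card (Combinatorics.Line α J) ≤
      avg fun t => density {z | ∀ a, Sum.elim (collapse a (fill t l.idxFun)) z ∈ A} := by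
  let G (l : Combinatorics.Line α J) : Set ((J × F → Option α) × (R → Option α)) :=
    {p | ∀ a, Sum.elim (collapse a (fill p.1 l.idxFun)) p.2 ∈ A}
  have le_density_fiber (t : J × F → Option α) : b ≤ density {z | (t, z) ∈ ⋃ l, G l} := by
    let V (z : R → Option α) : Set (J → α) := {v | Sum.elim (fill t (some ∘ v)) z ∈ A}
    have two_mul_le : 2 * b ≤ avg fun z => density (V z) := by
      refine (le_avg fun v : J → α => hA (fill t (some ∘ v))).trans_eq ?_
      exact avg_comm fun v z =>
        {z | Sum.elim (fill t (some ∘ v)) z ∈ A}.indicator (1 : (R → Option α) → ℝ) z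
    refine (le_density_of_two_mul_le_avg hb.le (fun z => density_le_one (V z)) two_mul_le).trans
      (density_mono fun z hz => ?_)
    obtain ⟨l, hl⟩ := hJ (V z) hz
    refine Set.mem_iUnion.2 ⟨l, fun a => ?_⟩
    rw [collapse_fill]
    exact hl a
  have le_density_iUnion : b ≤ density (⋃ l, G l) := by
    rw [density, avg_prod]
    exact le_avg le_density_fiber
  obtain ⟨l, hl⟩ := exists_div_card_le_density hb le_density_iUnion
  rw [density, avg_prod] at hl
  exact ⟨l, hl⟩

lemma LineFree.add_mul_div_card_le [Nonempty α] {η : Type*} [Finite η] {ε δ b c : ℝ} (hb : 0 < b)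
    (hJ : ∀ B : Set (J → α), b ≤ density B → ∃ l : Combinatorics.Line α J, ∀ a, l a ∈ B)
    (hδ : 0 ≤ δ) (hη : ∀ B : Set (η → Option α), LineFree B → density B ≤ δ)
    (htiled : ∀ P : α → Set (F → Option α), (∀ a, Insensitive a (P a)) →
      AlmostTiled η (⋂ a, P a) ε)
    {A : Set (J × F ⊕ R → Option α)} (hA : LineFree A) (hbc : 2 * b ≤ c)
    (hc : ∀ y, c ≤ density {z | Sum.elim y z ∈ A}) :
    c + δ * (b / Nat.card (Combinatorics.Line α J)) ≤
      δ + Nat.card α * ε + density {f : F → Option α | ∀ i, f i ≠ none} := by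
  obtain ⟨l, hl⟩ := exists_line_div_card_le_avg_fill hb hJ fun y => hbc.trans (hc y)
  obtain ⟨j, hj⟩ := l.proper
  refine le_trans ?_ (hA.avg_fill_le hδ hη htiled hj)
  rw [avg_add, avg_const_mul]
  exact add_le_add (le_avg fun t => hc _) (by gcongr)

end FilledBlocks

section DensityHalesJewettOption

variable {α β : Type*} [Finite α] [Finite β]

lemma density_forall_ne_none (α ι : Type*) [Finite α] [Finite ι] :
    density {x : ι → Option α | ∀ i, x i ≠ none} =
      ((Nat.card α : ℝ) / (Nat.card α + 1)) ^ Nat.card ι := by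
  have range_eq : {x : ι → Option α | ∀ i, x i ≠ none} =
      Set.range fun y : ι → α => some ∘ y := by
    ext x
    refine ⟨fun hx => ?_, ?_⟩
    · choose y hy using fun i => Option.ne_none_iff_exists'.1 (hx i)
      exact ⟨y, funext fun i => (hy i).symm⟩
    · rintro ⟨y, rfl⟩ i
      exact Option.some_ne_none _
  rw [density_eq_ncard_div, range_eq, ← Set.image_univ,
    Set.ncard_image_of_injective _ (Option.some_injective α).comp_left, Set.ncard_univ,
    Nat.card_fun, Nat.card_fun, Finite.card_option, div_pow]
  push_cast
  rfl

lemma exists_density_forall_ne_none_le (α : Type*) [Finite α] {ε : ℝ} (hε : 0 < ε) :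
    ∃ L : ℕ, ∀ (ι : Type) [Finite ι], L ≤ Nat.card ι →
      density {x : ι → Option α | ∀ i, x i ≠ none} ≤ ε := by
  have lt_one : (Nat.card α : ℝ) / (Nat.card α + 1) < 1 := by
    rw [div_lt_one (by positivity)]
    exact lt_add_one _
  obtain ⟨L, hL⟩ := exists_pow_lt_of_lt_one hε lt_one
  refine ⟨L, fun ι _ hι => ?_⟩
  rw [density_forall_ne_none]
  exact (pow_le_pow_of_le_one (by positivity) lt_one.le hι).trans hL.le

lemma ForcesLine.mono {δ δ' : ℝ} (h : ForcesLine α δ) (hδ : δ ≤ δ') : ForcesLine α δ' := by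
  obtain ⟨ι, hι, h⟩ := h
  exact ⟨ι, hι, fun A hA => h A (hδ.trans hA)⟩

lemma forcesLine_two (α : Type*) [Finite α] : ForcesLine α 2 :=
  ⟨Unit, inferInstance, fun A hA => by linarith [density_le_one A]⟩

lemma ForcesLine.congr {δ : ℝ} (h : ForcesLine α δ) (e : α ≃ β) : ForcesLine β δ := by
  obtain ⟨ι, hι, h⟩ := h
  refine ⟨ι, hι, fun A hA => ?_⟩
  rw [density, ← avg_equiv (Equiv.arrowCongr (Equiv.refl ι) e)] at hA
  obtain ⟨l, hl⟩ := h {x | e ∘ x ∈ A} hA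
  refine ⟨l.map e, fun b => ?_⟩
  have : e ∘ l (e.symm b) ∈ A := hl (e.symm b)
  rwa [← Combinatorics.Line.map_apply, Equiv.apply_symm_apply] at this

lemma DensityHJ.exists_lt_forcesLine_option [Nonempty α] (hα : DensityHJ α) {δ : ℝ} (hδ : 0 < δ)
    (h : ∀ δ' > δ, ForcesLine (Option α) δ') : ∃ δ' < δ, ForcesLine (Option α) δ' := by
  have := Fintype.ofFinite α
  set b := min (δ / 4) 1
  have b_pos : 0 < b := by positivity
  obtain ⟨J, _, hJ⟩ := hα b b_pos
  have : Nonempty (Combinatorics.Line α J) := by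
    obtain ⟨l, -⟩ := hJ Set.univ
      (by rw [density, Set.indicator_univ]; exact (min_le_right _ _).trans (avg_const 1).ge)
    exact ⟨l⟩
  have card_line_pos : (0 : ℝ) < Nat.card (Combinatorics.Line α J) := by exact_mod_cast Nat.card_pos
  have card_pos : (0 : ℝ) < Nat.card α := by exact_mod_cast Nat.card_pos
  set γ : ℝ := b / Nat.card (Combinatorics.Line α J)
  have δγ_pos : 0 < δ * γ := by positivity
  obtain ⟨η, _, hη⟩ := (h (δ + δ * γ / 4) (by linarith)).exists_density_le
  obtain ⟨L, hL⟩ := exists_density_forall_ne_none_le α (show 0 < δ * γ / 8 by positivity)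
  obtain ⟨F, _, hLF, hF⟩ := hα.exists_almostTiled_biInter L Finset.univ η
    (δ * γ / 8 / Nat.card α) (by positivity)
  set κ := min (δ / 2) (δ * γ / 4)
  have κ_pos : 0 < κ := by positivity
  have card_words_pos : (0 : ℝ) < Nat.card (J × F → Option α) := by exact_mod_cast Nat.card_pos
  set ρ := κ / (2 * Nat.card (J × F → Option α)) with ρ_def
  have ρ_pos : 0 < ρ := by positivity
  obtain ⟨R, _, hR⟩ := (h (δ + ρ) (by linarith)).exists_density_le
  refine ⟨δ - ρ, by linarith, J × F ⊕ R, inferInstance, fun A hA => ?_⟩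
  by_contra! hline
  have le_density_fiber (y : J × F → Option α) : δ - κ ≤ density {z | Sum.elim y z ∈ A} := by
    have := LineFree.le_density_right_fiber hline hR hA y
    have : Nat.card (J × F → Option α) * (δ + ρ - (δ - ρ)) = κ := by
      rw [ρ_def]
      field_simp
      ring
    linarith
  have key := LineFree.add_mul_div_card_le b_pos hJ (by positivity) hη
    (fun P hP => by simpa only [Finset.mem_univ, Set.iInter_true] using hF P hP) hline
    (by linarith [min_le_left (δ / 4) 1, min_le_left (δ / 2) (δ * γ / 4)]) le_density_fiber
  rw [mul_div_cancel₀ _ card_pos.ne'] at key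
  have density_ne_none := hL F hLF
  nlinarith [min_le_right (δ / 2) (δ * γ / 4), mul_pos δγ_pos (show 0 < γ by positivity)]

lemma DensityHJ.option [Nonempty α] (hα : DensityHJ α) : DensityHJ (Option α) := by
  by_contra hcon
  obtain ⟨δ₀, hδ₀, hnot⟩ : ∃ δ > 0, ¬ ForcesLine (Option α) δ := by
    simpa only [DensityHJ, not_forall, exists_prop] using hcon
  set T := {δ : ℝ | ForcesLine (Option α) δ}
  have nonempty : T.Nonempty := ⟨2, forcesLine_two _⟩
  have le_of_mem : δ₀ ∈ lowerBounds T := fun δ hδ =>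
    le_of_not_ge fun hle => hnot (ForcesLine.mono hδ hle)
  obtain ⟨δ, hlt, hδ⟩ := hα.exists_lt_forcesLine_option (hδ₀.trans_le (le_csInf nonempty le_of_mem))
    fun δ' hδ' => by
      obtain ⟨δ, hδ, hlt⟩ := exists_lt_of_csInf_lt nonempty hδ'
      exact ForcesLine.mono hδ hlt.le
  exact hlt.not_ge (csInf_le ⟨δ₀, le_of_mem⟩ hδ)

lemma densityHJ_of_subsingleton (α : Type*) [Finite α] [Subsingleton α] : DensityHJ α := by
  refine fun δ hδ => ⟨Unit, inferInstance, fun A hA => ?_⟩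
  obtain ⟨x, hx⟩ := nonempty_of_density_pos (hδ.trans_le hA)
  refine ⟨⟨fun _ => none, (), rfl⟩, fun a => ?_⟩
  convert hx

theorem densityHJ_fin (k : ℕ) : DensityHJ (Fin (k + 1)) := by
  induction k with
  | zero => exact densityHJ_of_subsingleton (Fin 1)
  | succ k ih => exact fun δ hδ => (ih.option δ hδ).congr (finSuccEquiv (k + 1)).symm

end DensityHalesJewettOption

section ProgressionAverages

variable {H : Type*} [NormedAddCommGroup H] [InnerProductSpace ℝ H]

/-- The average of the powers of `U` whose exponents form the arithmetic progression of length `R`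
with first term `x` and difference `D`. -/
noncomputable def progAvg (U : H →ₗᵢ[ℝ] H) (x D R : ℕ) : Module.End ℝ H :=
  (R : ℝ)⁻¹ • ∑ r ∈ range R, (U ^ (x + D * r)).toLinearMap

variable (U : H →ₗᵢ[ℝ] H)

lemma progAvg_apply (x D R : ℕ) (h : H) :
    progAvg U x D R h = (R : ℝ)⁻¹ • ∑ r ∈ range R, (U ^ (x + D * r)) h := by
  simp only [progAvg, LinearMap.smul_apply, LinearMap.sum_apply, LinearIsometry.coe_toLinearMap]

lemma pow_add_apply (m n : ℕ) (h : H) : (U ^ (m + n)) h = (U ^ m) ((U ^ n) h) := by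
  rw [pow_add]
  rfl

lemma commute_progAvg (x D R x' D' R' : ℕ) : Commute (progAvg U x D R) (progAvg U x' D' R') := by
  have commute_pow (m n : ℕ) : Commute (U ^ m).toLinearMap (U ^ n).toLinearMap :=
    LinearMap.ext fun h => DFunLike.congr_fun (Commute.pow_pow_self U m n).eq h
  exact .smul_left (.smul_right (.sum_left _ _ _ fun _ _ => .sum_right _ _ _ fun _ _ =>
    commute_pow _ _) _) _

lemma progAvg_progAvg_comm (x D R x' D' R' : ℕ) (h : H) :
    progAvg U x D R (progAvg U x' D' R' h) = progAvg U x' D' R' (progAvg U x D R h) :=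
  LinearMap.congr_fun (commute_progAvg U x D R x' D' R') h

lemma norm_progAvg_le (x D R : ℕ) (h : H) : ‖progAvg U x D R h‖ ≤ ‖h‖ := by
  have norm_sum_le : ‖∑ r ∈ range R, (U ^ (x + D * r)) h‖ ≤ R * ‖h‖ :=
    (norm_sum_le_of_le _ fun r _ => ((U ^ (x + D * r)).norm_map h).le).trans_eq (by simp)
  rw [progAvg_apply, norm_smul, norm_inv, Real.norm_natCast]
  exact inv_mul_le_of_le_mul₀ (by positivity) (norm_nonneg h) norm_sum_le

variable {U} in
lemma pow_mul_apply_of_fixed {s : ℕ} {h : H} (hs : (U ^ s) h = h) (n : ℕ) :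
    (U ^ (s * n)) h = h := by
  rw [pow_mul, LinearIsometry.coe_pow]
  exact Function.iterate_fixed hs n

variable {U} in
lemma progAvg_of_fixed {h : H} (hU : U h = h) (x D : ℕ) {R : ℕ} (hR : 1 ≤ R) :
    progAvg U x D R h = h := by
  have pow_apply (n : ℕ) : (U ^ n) h = h := by
    rw [LinearIsometry.coe_pow]
    exact Function.iterate_fixed hU n
  have hR' : (R : ℝ) ≠ 0 := by positivity
  simp only [progAvg_apply, pow_apply, sum_const, card_range]
  rw [← Nat.cast_smul_eq_nsmul ℝ, inv_smul_smul₀ hR']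

lemma norm_pow_progAvg_sub_le (x D R j : ℕ) (h : H) :
    ‖(U ^ (D * j)) (progAvg U x D R h) - progAvg U x D R h‖ ≤ j * (2 * ‖h‖ / R) := by
  have norm_sub_le_one :
      ‖(U ^ D) (progAvg U x D R h) - progAvg U x D R h‖ ≤ 2 * ‖h‖ / R := by
    have telescope : (U ^ D) (progAvg U x D R h) - progAvg U x D R h =
        (R : ℝ)⁻¹ • ((U ^ (x + D * R)) h - (U ^ (x + D * 0)) h) := by
      rw [progAvg_apply, map_smul, map_sum, ← smul_sub, ← sum_sub_distrib,
        ← sum_range_sub fun r => (U ^ (x + D * r)) h]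
      simp only [← pow_add_apply, mul_add_one, ← add_assoc, add_comm D]
    rw [telescope, norm_smul, norm_inv, Real.norm_natCast, div_eq_inv_mul, two_mul]
    gcongr
    exact (norm_sub_le _ _).trans_eq (by simp only [LinearIsometry.norm_map])
  induction j with
  | zero => simp
  | succ j ih =>
    have split : (U ^ (D * (j + 1))) (progAvg U x D R h) - progAvg U x D R h =
        (U ^ (D * j)) ((U ^ D) (progAvg U x D R h) - progAvg U x D R h) +
          ((U ^ (D * j)) (progAvg U x D R h) - progAvg U x D R h) := by
      rw [map_sub, ← pow_add_apply, mul_add_one, sub_add_sub_cancel]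
    rw [split, Nat.cast_succ, add_one_mul, add_comm]
    refine (norm_add_le _ _).trans ?_
    rw [LinearIsometry.norm_map]
    linarith

variable {U}

lemma abs_inner_progAvg_sub_le {x x' D D' q q' s : ℕ} (hs : q' * D = q * D' + s) (R j : ℕ) (h : H) :
    |inner ℝ (progAvg U x D R h) (progAvg U x' D' R h) -
        inner ℝ ((U ^ (s * j)) (progAvg U x D R h)) (progAvg U x' D' R h)| ≤
      j * ((q + q') * (2 * ‖h‖ ^ 2 / R)) := by
  set u := progAvg U x D R h
  set u' := progAvg U x' D' R h
  set v := (U ^ (D * (q' * j))) u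
  set v' := (U ^ (D' * (q * j))) u'
  have exponent_eq : D * (q' * j) = D' * (q * j) + s * j := by linear_combination j * hs
  have inner_shift : inner ℝ ((U ^ (s * j)) u) u' = inner ℝ v v' := by
    simp only [v, v', exponent_eq, pow_add_apply, LinearIsometry.inner_map_map]
  have inner_split : inner ℝ u u' - inner ℝ v v' = inner ℝ (u - v) u' + inner ℝ v (u' - v') := by
    rw [inner_sub_left, inner_sub_right]
    ring
  have norm_u' : ‖u'‖ ≤ ‖h‖ := norm_progAvg_le ..
  have norm_v : ‖v‖ ≤ ‖h‖ := ((U ^ _).norm_map u).trans_le (norm_progAvg_le ..)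
  have norm_sub_v : ‖u - v‖ ≤ (q' * j : ℕ) * (2 * ‖h‖ / R) :=
    norm_sub_rev u v ▸ norm_pow_progAvg_sub_le U x D R (q' * j) h
  have norm_sub_v' : ‖u' - v'‖ ≤ (q * j : ℕ) * (2 * ‖h‖ / R) :=
    norm_sub_rev u' v' ▸ norm_pow_progAvg_sub_le U x' D' R (q * j) h
  rw [inner_shift, inner_split]
  calc
    _ ≤ ‖u - v‖ * ‖u'‖ + ‖v‖ * ‖u' - v'‖ :=
      (abs_add_le _ _).trans (add_le_add (abs_real_inner_le_norm _ _) (abs_real_inner_le_norm _ _))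
    _ ≤ (q' * j : ℕ) * (2 * ‖h‖ / R) * ‖h‖ + ‖h‖ * ((q * j : ℕ) * (2 * ‖h‖ / R)) := by gcongr
    _ = _ := by
      push_cast
      ring

lemma abs_inner_progAvg_le {x x' D D' q q' s J : ℕ} (hJ : 1 ≤ J) (hs : q' * D = q * D' + s)
    (R : ℕ) (h : H) :
    |inner ℝ (progAvg U x D R h) (progAvg U x' D' R h)| ≤
      ‖progAvg U 0 s J (progAvg U x D R h)‖ * ‖h‖ + J * ((q + q') * (2 * ‖h‖ ^ 2 / R)) := by
  set u := progAvg U x D R h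
  set u' := progAvg U x' D' R h
  have J_pos : (0 : ℝ) < J := by positivity
  have sub_eq : inner ℝ u u' - inner ℝ (progAvg U 0 s J u) u' =
      (J : ℝ)⁻¹ * ∑ j ∈ range J, (inner ℝ u u' - inner ℝ ((U ^ (s * j)) u) u') := by
    simp only [progAvg_apply, real_inner_smul_left, sum_inner, sum_sub_distrib, mul_sub, zero_add,
      sum_const, card_range, nsmul_eq_mul, inv_mul_cancel_left₀ J_pos.ne']
  have abs_sub_le : |inner ℝ u u' - inner ℝ (progAvg U 0 s J u) u'| ≤
      J * ((q + q') * (2 * ‖h‖ ^ 2 / R)) := by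
    rw [sub_eq, abs_mul, abs_of_pos (inv_pos.2 J_pos), inv_mul_le_iff₀ J_pos]
    refine (abs_sum_le_sum_abs _ _).trans ((sum_le_card_nsmul _ _ _ fun j hj => ?_).trans_eq
      (by rw [card_range, nsmul_eq_mul]))
    refine (abs_inner_progAvg_sub_le hs R j h).trans ?_
    have : (j : ℝ) ≤ J := by exact_mod_cast (mem_range.1 hj).le
    gcongr
  have abs_inner_le : |inner ℝ (progAvg U 0 s J u) u'| ≤ ‖progAvg U 0 s J u‖ * ‖h‖ :=
    (abs_real_inner_le_norm _ _).trans (by gcongr; exact norm_progAvg_le ..)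
  linarith [abs_sub_abs_le_abs_sub (inner ℝ u u') (inner ℝ (progAvg U 0 s J u) u')]

lemma norm_progAvg_progAvg_le {d s : ℕ} (hs : s ∣ d) {h p : H} (hp : (U ^ s) p = p) {J R : ℕ}
    {ε : ℝ} (hJ : ‖progAvg U 0 s J h - p‖ ≤ ε) (hR : ‖progAvg U 0 1 R h‖ ≤ ε) (x q : ℕ) :
    ‖progAvg U 0 s J (progAvg U x (d * q + 1) R h)‖ ≤ 3 * ε := by
  have progAvg_p : progAvg U x (d * q + 1) R p = (U ^ x) (progAvg U 0 1 R p) := by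
    obtain ⟨m, rfl⟩ := hs
    rw [progAvg_apply, progAvg_apply, map_smul, map_sum]
    congr 1
    refine sum_congr rfl fun r _ => ?_
    rw [← pow_add_apply,
      show x + (s * m * q + 1) * r = (x + (0 + 1 * r)) + s * (m * q * r) by ring, pow_add_apply,
      pow_mul_apply_of_fixed hp]
  have norm_progAvg_p : ‖progAvg U 0 1 R p‖ ≤ ε + ε :=
    calc
      _ = ‖progAvg U 0 s J (progAvg U 0 1 R h) - progAvg U 0 1 R (progAvg U 0 s J h - p)‖ := by
        rw [map_sub, progAvg_progAvg_comm, sub_sub_cancel]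
      _ ≤ ‖progAvg U 0 1 R h‖ + ‖progAvg U 0 s J h - p‖ :=
        (norm_sub_le _ _).trans (add_le_add (norm_progAvg_le ..) (norm_progAvg_le ..))
      _ ≤ ε + ε := add_le_add hR hJ
  calc
    _ = ‖progAvg U x (d * q + 1) R (progAvg U 0 s J h - p) + (U ^ x) (progAvg U 0 1 R p)‖ := by
      rw [map_sub, progAvg_p, progAvg_progAvg_comm, sub_add_cancel]
    _ ≤ ‖progAvg U 0 s J h - p‖ + ‖progAvg U 0 1 R p‖ :=
      (norm_add_le _ _).trans (add_le_add (norm_progAvg_le ..) ((U ^ x).norm_map _).le)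
    _ ≤ 3 * ε := by linarith

variable (U) in
lemma exists_tendsto_progAvg [CompleteSpace H] (s : ℕ) (h : H) :
    ∃ p, (U ^ s) p = p ∧ Tendsto (fun J => progAvg U 0 s J h) atTop (nhds p) := by
  set f := (U ^ s).toContinuousLinearMap
  have iterate_f (r : ℕ) : f^[r] h = (U ^ (s * r)) h := by
    rw [pow_mul, LinearIsometry.coe_pow (U ^ s)]
    rfl
  refine ⟨_, ((f.eqLocus (1 : H →L[ℝ] H)).orthogonalProjectionOnto h).2,
    (f.tendsto_birkhoffAverage_orthogonalProjection
      (LinearIsometry.norm_toContinuousLinearMap_le _) h).congr fun J => ?_⟩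
  simp only [birkhoffAverage, birkhoffSum, iterate_f, progAvg_apply, zero_add, id_eq]

end ProgressionAverages

section ProgressionAveragesLimit

variable {H : Type*} [NormedAddCommGroup H] [InnerProductSpace ℝ H]

lemma norm_sum_sq_le {ι : Type*} {s : Finset ι} {v : ι → H} {C η : ℝ} (hη : 0 ≤ η)
    (norm_le : ∀ i ∈ s, ‖v i‖ ≤ C)
    (inner_le : ∀ i ∈ s, ∀ j ∈ s, i ≠ j → inner ℝ (v i) (v j) ≤ η) :
    ‖∑ i ∈ s, v i‖ ^ 2 ≤ #s * C ^ 2 + #s ^ 2 * η := by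
  classical
  have inner_le_ite (i) (hi : i ∈ s) (j) (hj : j ∈ s) :
      inner ℝ (v i) (v j) ≤ (if i = j then C ^ 2 else 0) + η := by
    split_ifs with hij
    · rw [← hij, real_inner_self_eq_norm_sq]
      linarith [pow_le_pow_left₀ (norm_nonneg (v i)) (norm_le i hi) 2]
    · rw [zero_add]
      exact inner_le i hi j hj hij
  rw [← real_inner_self_eq_norm_sq, sum_inner]
  simp only [inner_sum]
  calc
    _ ≤ ∑ i ∈ s, ∑ j ∈ s, ((if i = j then C ^ 2 else 0) + η) :=
      sum_le_sum fun i hi => sum_le_sum fun j hj => inner_le_ite i hi j hj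
    _ = ∑ i ∈ s, (C ^ 2 + #s * η) := sum_congr rfl fun i hi => by
      rw [sum_add_distrib, sum_ite_eq, if_pos hi, sum_const, nsmul_eq_mul]
    _ = _ := by
      rw [sum_const, nsmul_eq_mul]
      ring

variable [CompleteSpace H] {U : H →ₗᵢ[ℝ] H} {h : H}

lemma exists_norm_progAvg_sub_le (U : H →ₗᵢ[ℝ] H) (h : H) {ε : ℝ} (hε : 0 < ε) (Q : ℕ) :
    ∃ J ≥ 1, ∀ s < Q, ∃ p, (U ^ s) p = p ∧ ‖progAvg U 0 s J h - p‖ ≤ ε := by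
  choose p hp tendsto_p using fun s => exists_tendsto_progAvg U s h
  have eventually_le : ∀ᶠ J in atTop, ∀ s ∈ range Q, ‖progAvg U 0 s J h - p s‖ ≤ ε :=
    (eventually_all_finset _).2 fun s _ =>
      (tendsto_iff_norm_sub_tendsto_zero.1 (tendsto_p s)).eventually_le_const hε
  obtain ⟨J, hJ, one_le_J⟩ := (eventually_le.and (eventually_ge_atTop 1)).exists
  exact ⟨J, one_le_J, fun s hs => ⟨p s, hp s, hJ s (mem_range.2 hs)⟩⟩

-- For `q < q'` the differences satisfy `q' * (d * q + 1) - q * (d * q' + 1) = q' - q`, so that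
-- shifting both averages by multiples of their differences averages one of them along `q' - q`.
lemma eventually_abs_inner_progAvg_le
    (hh : Tendsto (fun J => progAvg U 0 1 J h) atTop (nhds 0)) {η : ℝ} (hη : 0 < η) (q₀ Q : ℕ) :
    ∀ᶠ R in atTop, ∀ d, (∀ s, 1 ≤ s → s < Q → s ∣ d) → ∀ (x : ℕ → ℕ) (q q' : ℕ),
      q₀ ≤ q → q < q' → q' < q₀ + Q →
        |inner ℝ (progAvg U (x q) (d * q + 1) R h) (progAvg U (x q') (d * q' + 1) R h)| ≤ η := by
  set ε := η / (6 * (‖h‖ + 1))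
  have ε_pos : 0 < ε := by positivity
  have ε_mul_le : 3 * ε * ‖h‖ ≤ η / 2 := by
    have : ε * (6 * (‖h‖ + 1)) = η := div_mul_cancel₀ _ (by positivity)
    linarith
  obtain ⟨J, one_le_J, hJ⟩ := exists_norm_progAvg_sub_le U h ε_pos Q
  have error_tendsto : Tendsto (fun R : ℕ => J * (2 * ((q₀ : ℝ) + Q) * (2 * ‖h‖ ^ 2 / R)))
      atTop (nhds 0) := by
    simpa only [mul_zero] using ((tendsto_const_div_atTop_nhds_zero_nat (2 * ‖h‖ ^ 2)).const_mul
      (2 * ((q₀ : ℝ) + Q))).const_mul (J : ℝ)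
  filter_upwards [(tendsto_zero_iff_norm_tendsto_zero.1 hh).eventually_le_const ε_pos,
    error_tendsto.eventually_le_const (half_pos hη)] with R norm_le error_le d hd x q q' hq hqq' hq'
  obtain ⟨s, rfl⟩ := Nat.exists_eq_add_of_lt hqq'
  obtain ⟨p, hp, hpJ⟩ := hJ (s + 1) (by lia)
  have norm_avg_le := norm_progAvg_progAvg_le (hd (s + 1) (by lia) (by lia)) hp hpJ norm_le (x q) q
  have index_le : (q : ℝ) + (q + s + 1 : ℕ) ≤ 2 * (q₀ + Q) := by
    exact_mod_cast (by lia : q + (q + s + 1) ≤ 2 * (q₀ + Q))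
  calc
    _ ≤ _ := abs_inner_progAvg_le one_le_J (s := s + 1) (q := q) (q' := q + s + 1) (by ring) R h
    _ ≤ 3 * ε * ‖h‖ + J * (2 * ((q₀ : ℝ) + Q) * (2 * ‖h‖ ^ 2 / R)) := by gcongr
    _ ≤ η := by linarith

lemma exists_norm_average_progAvg_le
    (hh : Tendsto (fun J => progAvg U 0 1 J h) atTop (nhds 0)) {ε : ℝ} (hε : 0 < ε) (q₀ : ℕ) :
    ∃ Q R : ℕ, 1 ≤ Q ∧ 1 ≤ R ∧ ∀ d : ℕ, (∀ s, 1 ≤ s → s < Q → s ∣ d) → ∀ x : ℕ → ℕ,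
      ‖(Q : ℝ)⁻¹ • ∑ q ∈ Ico q₀ (q₀ + Q), progAvg U (x q) (d * q + 1) R h‖ ≤ ε := by
  set η := ε ^ 2 / 2 with hη
  have η_pos : 0 < η := by positivity
  obtain ⟨Q, hQ⟩ := exists_nat_gt (‖h‖ ^ 2 / η)
  have Q_pos : (0 : ℝ) < Q := lt_of_le_of_lt (by positivity) hQ
  obtain ⟨R, inner_le, one_le_R⟩ :=
    ((eventually_abs_inner_progAvg_le hh η_pos q₀ Q).and (eventually_ge_atTop 1)).exists
  refine ⟨Q, R, by exact_mod_cast Q_pos, one_le_R, fun d hd x => ?_⟩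
  have norm_sq_le := norm_sum_sq_le (s := Ico q₀ (q₀ + Q))
    (v := fun q => progAvg U (x q) (d * q + 1) R h) η_pos.le (fun q _ => norm_progAvg_le ..)
    fun q hq q' hq' hne => by
      rw [mem_Ico] at hq hq'
      rcases hne.lt_or_gt with hlt | hlt
      · exact (le_abs_self _).trans (inner_le d hd x q q' hq.1 hlt hq'.2)
      · rw [real_inner_comm]
        exact (le_abs_self _).trans (inner_le d hd x q' q hq'.1 hlt hq.2)
  rw [Nat.card_Ico, Nat.add_sub_cancel_left] at norm_sq_le
  refine le_of_sq_le_sq ?_ hε.le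
  rw [norm_smul, norm_inv, Real.norm_natCast, mul_pow]
  calc
    _ ≤ (Q : ℝ)⁻¹ ^ 2 * (Q * ‖h‖ ^ 2 + Q ^ 2 * η) := by gcongr
    _ ≤ (Q : ℝ)⁻¹ ^ 2 * (Q * (Q * η) + Q ^ 2 * η) := by
      gcongr
      exact ((div_lt_iff₀ η_pos).1 hQ).le
    _ = ε ^ 2 := by
      field_simp
      linarith

theorem exists_norm_average_progAvg_sub_le (U : H →ₗᵢ[ℝ] H) (f : H) {ε : ℝ} (hε : 0 < ε) (q₀ : ℕ) :
    ∃ Q R J : ℕ, 1 ≤ Q ∧ 1 ≤ R ∧ 1 ≤ J ∧ ∀ d : ℕ, (∀ s, 1 ≤ s → s < Q → s ∣ d) → ∀ x : ℕ → ℕ,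
      ‖(Q : ℝ)⁻¹ • ∑ q ∈ Ico q₀ (q₀ + Q), progAvg U (x q) (d * q + 1) R f -
        progAvg U 0 1 J f‖ ≤ ε := by
  obtain ⟨p, hp, tendsto_p⟩ := exists_tendsto_progAvg U 1 f
  rw [pow_one] at hp
  have tendsto_sub : Tendsto (fun J => progAvg U 0 1 J (f - p)) atTop (nhds 0) := by
    refine ((tendsto_p.sub_const p).congr' ?_).trans_eq (by rw [sub_self])
    filter_upwards [eventually_ge_atTop 1] with J hJ
    rw [map_sub, progAvg_of_fixed hp 0 1 hJ]
  obtain ⟨Q, R, hQ, hR, norm_le⟩ := exists_norm_average_progAvg_le tendsto_sub (half_pos hε) q₀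
  obtain ⟨J, norm_J_le, hJ⟩ := ((tendsto_zero_iff_norm_tendsto_zero.1
    tendsto_sub |>.eventually_le_const (half_pos hε)).and (eventually_ge_atTop 1)).exists
  refine ⟨Q, R, J, hQ, hR, hJ, fun d hd x => ?_⟩
  have average_p : (Q : ℝ)⁻¹ • ∑ q ∈ Ico q₀ (q₀ + Q), progAvg U (x q) (d * q + 1) R p = p := by
    simp only [progAvg_of_fixed hp _ _ hR, sum_const, Nat.card_Ico, Nat.add_sub_cancel_left]
    rw [← Nat.cast_smul_eq_nsmul ℝ, inv_smul_smul₀ (by positivity)]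
  calc
    _ = ‖(Q : ℝ)⁻¹ • ∑ q ∈ Ico q₀ (q₀ + Q), progAvg U (x q) (d * q + 1) R (f - p) -
          progAvg U 0 1 J (f - p)‖ := by
      simp only [map_sub, sum_sub_distrib, smul_sub, average_p, progAvg_of_fixed hp 0 1 hJ,
        sub_sub_sub_cancel_right]
    _ ≤ ε / 2 + ε / 2 := norm_sub_le_of_le (norm_le d hd x) norm_J_le
    _ = ε := add_halves ε

end ProgressionAveragesLimit

open scoped BoundedContinuousFunction

section InvariantMean

/-- The indicator function of a set of integers, as an element of the domain of an invariant
mean. -/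
noncomputable def boundedIndicator (A : Set ℤ) : ℤ →ᵇ ℝ :=
  BoundedContinuousFunction.indicator A (isClopen_discrete A)

lemma boundedIndicator_apply (A : Set ℤ) (z : ℤ) :
    boundedIndicator A z = A.indicator (1 : ℤ → ℝ) z :=
  rfl

/-- The shift `f ↦ f(· - 1)` of bounded functions on the integers. -/
noncomputable def shift : Module.End ℝ (ℤ →ᵇ ℝ) where
  toFun f := f.compContinuous ⟨fun z => z - 1, continuous_of_discreteTopology⟩
  map_add' _ _ := rfl
  map_smul' _ _ := rfl

lemma shift_apply (f : ℤ →ᵇ ℝ) (z : ℤ) : shift f z = f (z - 1) :=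
  rfl

lemma shift_pow_apply (n : ℕ) (f : ℤ →ᵇ ℝ) (z : ℤ) : (shift ^ n) f z = f (z - n) := by
  induction n generalizing z with
  | zero => simp
  | succ n ih =>
    rw [pow_succ', Module.End.mul_apply, shift_apply, ih, sub_sub, Nat.cast_succ, add_comm]

/-- A shift-invariant mean on the integers, that is, a positive normalized invariant linear
functional on the bounded functions. -/
structure IsInvariantMean (m : (ℤ →ᵇ ℝ) →ₗ[ℝ] ℝ) : Prop where
  nonneg : ∀ f, 0 ≤ f → 0 ≤ m f
  one : m 1 = 1
  map_shift : ∀ f, m (shift f) = m f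

/-- The average of a bounded function over the `L` integers starting with `a`. -/
noncomputable def windowAvg (a : ℤ) (L : ℕ) : (ℤ →ᵇ ℝ) →ₗ[ℝ] ℝ where
  toFun f := (L : ℝ)⁻¹ * ∑ i ∈ range L, f (a + i)
  map_add' f g := by simp only [BoundedContinuousFunction.add_apply, sum_add_distrib, mul_add]
  map_smul' c f := by
    simp only [BoundedContinuousFunction.coe_smul, smul_eq_mul, RingHom.id_apply, ← mul_sum]
    ring

lemma windowAvg_apply (a : ℤ) (L : ℕ) (f : ℤ →ᵇ ℝ) :
    windowAvg a L f = (L : ℝ)⁻¹ * ∑ i ∈ range L, f (a + i) :=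
  rfl

lemma windowAvg_one (a : ℤ) {L : ℕ} (hL : 1 ≤ L) : windowAvg a L 1 = 1 := by
  have : (L : ℝ) ≠ 0 := by positivity
  simp [windowAvg_apply, this]

lemma abs_windowAvg_le (a : ℤ) (L : ℕ) (f : ℤ →ᵇ ℝ) : |windowAvg a L f| ≤ ‖f‖ := by
  rw [windowAvg_apply, abs_mul, abs_inv, Nat.abs_cast]
  refine inv_mul_le_of_le_mul₀ L.cast_nonneg (norm_nonneg f) ?_
  refine (abs_sum_le_sum_abs _ _).trans
    ((sum_le_card_nsmul _ _ _ fun i _ => f.norm_coe_le_norm (a + (i : ℕ))).trans_eq ?_)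
  rw [card_range, nsmul_eq_mul]

lemma abs_windowAvg_shift_sub_le (a : ℤ) (L : ℕ) (f : ℤ →ᵇ ℝ) :
    |windowAvg a L (shift f) - windowAvg a L f| ≤ 2 * ‖f‖ / L := by
  have telescope : ∑ i ∈ range L, (shift f (a + i) - f (a + i)) = f (a - 1) - f (a + L - 1) := by
    simpa [shift_apply, ← add_assoc] using sum_range_sub' (fun i : ℕ => f (a + i - 1)) L
  rw [windowAvg_apply, windowAvg_apply, ← mul_sub, ← sum_sub_distrib, telescope, abs_mul, abs_inv,
    Nat.abs_cast, div_eq_inv_mul]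
  gcongr
  exact f.dist_le_two_norm _ _

lemma exists_linearMap_tendsto {ι V : Type*} [AddCommGroup V] [Module ℝ V] (u : Ultrafilter ι)
    {A : ι → V →ₗ[ℝ] ℝ} (hA : ∀ f, ∃ C, ∀ j : ι, |A j f| ≤ C) :
    ∃ m : V →ₗ[ℝ] ℝ, ∀ f, Tendsto (fun j => A j f) u (nhds (m f)) := by
  have exists_limit (f : V) : ∃ x, Tendsto (fun j => A j f) u (nhds x) := by
    obtain ⟨C, hC⟩ := hA f
    obtain ⟨x, -, hx⟩ := (isCompact_Icc (a := -C) (b := C)).ultrafilter_le_nhds'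
      (u.map fun j => A j f) (Ultrafilter.mem_map.2 (Filter.univ_mem' fun j => abs_le.1 (hC j)))
    exact ⟨x, hx⟩
  choose m hm using exists_limit
  exact ⟨linearMapOfTendsto m A (tendsto_pi_nhds.2 hm), hm⟩

theorem exists_isInvariantMean (a : ℕ → ℤ) {L : ℕ → ℕ} (hL : Tendsto L atTop atTop) :
    ∃ m, IsInvariantMean m ∧
      ∀ f c, (∀ᶠ j in atTop, c ≤ windowAvg (a j) (L j) f) → c ≤ m f := by
  obtain ⟨m, hm⟩ := exists_linearMap_tendsto (hyperfilter ℕ) (A := fun j => windowAvg (a j) (L j))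
    fun f => ⟨‖f‖, fun j => abs_windowAvg_le (a j) (L j) f⟩
  have hyperfilter_le : (hyperfilter ℕ : Filter ℕ) ≤ atTop := Nat.hyperfilter_le_atTop
  refine ⟨m, ⟨fun f hf => ?_, ?_, fun f => ?_⟩, fun f c hc => ge_of_tendsto (hm f)
    (hyperfilter_le hc)⟩
  · exact ge_of_tendsto' (hm f) fun j =>
      mul_nonneg (by positivity) (sum_nonneg fun i _ => hf (a j + i))
  · refine tendsto_nhds_unique (hm 1) (tendsto_const_nhds.congr' (hyperfilter_le ?_))
    filter_upwards [hL.eventually_ge_atTop 1] with j hj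
    exact (windowAvg_one (a j) hj).symm
  · refine sub_eq_zero.1 (tendsto_nhds_unique ((hm (shift f)).sub (hm f)) ?_)
    exact (squeeze_zero_norm (fun j => abs_windowAvg_shift_sub_le (a j) (L j) f)
      ((tendsto_const_div_atTop_nhds_zero_nat (2 * ‖f‖)).comp hL)).mono_left hyperfilter_le

lemma windowAvg_boundedIndicator_cast (F : Set ℕ) (a L : ℕ) :
    windowAvg a L (boundedIndicator (Nat.cast '' F)) = (F ∩ Set.Ico a (a + L)).ncard / L := by
  classical
  have inter_eq : F ∩ Set.Ico a (a + L) = ↑({z ∈ Ico a (a + L) | z ∈ F}) := by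
    ext z
    simp [and_comm]
  have indicator_eq (i : ℕ) : boundedIndicator (Nat.cast '' F) ((a : ℤ) + i) =
      if a + i ∈ F then 1 else 0 := by
    rw [boundedIndicator_apply, Set.indicator_apply, ← Nat.cast_add,
      Nat.cast_injective.mem_set_image, Pi.one_apply]
  rw [windowAvg_apply, inter_eq, Set.ncard_coe_finset, card_filter, sum_Ico_eq_sum_range,
    Nat.add_sub_cancel_left, ← div_eq_inv_mul]
  simp only [indicator_eq, Nat.cast_sum, Nat.cast_ite, Nat.cast_one, Nat.cast_zero]

theorem exists_isInvariantMean_of_posUBD {E : Set ℕ} (hE : posUBD E) :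
    ∃ m, IsInvariantMean m ∧ 0 < m (boundedIndicator (Nat.cast '' (E \ {0}))) := by
  obtain ⟨δ, hδ, M, N, hMN, hN, hcard⟩ := hE
  obtain ⟨m, hm, le_m⟩ := exists_isInvariantMean (fun j => M j)
    (L := fun j => N j - M j + 1) ((tendsto_add_atTop_nat 1).comp hN)
  refine ⟨m, hm, (half_pos hδ).trans_le (le_m _ _ ?_)⟩
  filter_upwards [hN.eventually_ge_atTop 1] with j hj
  have inter_eq : E \ {0} ∩ Set.Ico (M j) (M j + (N j - M j + 1)) = E ∩ Set.Icc (M j) (N j) := by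
    ext z
    have := hMN j
    simp only [Set.mem_inter_iff, Set.mem_sdiff, Set.mem_singleton_iff, Set.mem_Ico, Set.mem_Icc]
    grind
  have one_le : (1 : ℝ) ≤ N j - M j := by
    rw [← Nat.cast_sub (hMN j).2]
    exact_mod_cast hj
  rw [windowAvg_boundedIndicator_cast, inter_eq, le_div_iff₀ (by positivity), ← Nat.card_coe_set_eq]
  push_cast [(hMN j).2]
  nlinarith [hcard j]

end InvariantMean

namespace IsInvariantMean

variable {m : (ℤ →ᵇ ℝ) →ₗ[ℝ] ℝ}

lemma mono (hm : IsInvariantMean m) {f g : ℤ →ᵇ ℝ} (h : ∀ z, f z ≤ g z) : m f ≤ m g := by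
  rw [← sub_nonneg, ← map_sub]
  exact hm.nonneg _ fun z => sub_nonneg.2 (h z)

lemma map_smul_one (hm : IsInvariantMean m) (c : ℝ) : m (c • 1) = c := by
  rw [map_smul, hm.one, smul_eq_mul, mul_one]

lemma map_shift_pow (hm : IsInvariantMean m) (n : ℕ) (f : ℤ →ᵇ ℝ) : m ((shift ^ n) f) = m f := by
  induction n with
  | zero => simp
  | succ n ih => rw [pow_succ', Module.End.mul_apply, hm.map_shift, ih]

lemma map_boundedIndicator_translate (hm : IsInvariantMean m) (t : ℕ) (A : Set ℤ) :
    m (boundedIndicator {n | n + (t : ℤ) ∈ A}) = m (boundedIndicator A) := by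
  rw [← hm.map_shift_pow t]
  congr 1
  ext z
  rw [shift_pow_apply]
  change boundedIndicator A (z - t + t) = _
  rw [sub_add_cancel]

lemma boundedIndicator_mono (hm : IsInvariantMean m) {A B : Set ℤ} (h : A ⊆ B) :
    m (boundedIndicator A) ≤ m (boundedIndicator B) :=
  hm.mono (Set.indicator_le_indicator_of_subset h fun _ => zero_le_one)

lemma boundedIndicator_le_one (hm : IsInvariantMean m) (A : Set ℤ) : m (boundedIndicator A) ≤ 1 :=
  hm.one ▸ hm.mono (Set.indicator_le_self' fun _ _ => zero_le_one)

lemma boundedIndicator_iUnion_le (hm : IsInvariantMean m) {Φ : Type*} [Fintype Φ] (G : Φ → Set ℤ) :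
    m (boundedIndicator (⋃ p, G p)) ≤ ∑ p, m (boundedIndicator (G p)) := by
  rw [← map_sum]
  refine hm.mono fun z => (indicator_iUnion_le_sum G z).trans_eq ?_
  rw [BoundedContinuousFunction.coe_sum, Finset.sum_apply]
  rfl

lemma exists_div_card_le (hm : IsInvariantMean m) {Φ : Type*} [Finite Φ] {G : Φ → Set ℤ}
    {c : ℝ} (hc : 0 < c) (h : c ≤ m (boundedIndicator (⋃ p, G p))) :
    ∃ p, c / Nat.card Φ ≤ m (boundedIndicator (G p)) :=
  have := Fintype.ofFinite Φ
  exists_div_card_le_of_le_sum hc (h.trans (hm.boundedIndicator_iUnion_le G))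

lemma half_le_boundedIndicator_density (hm : IsInvariantMean m) {X : Type*} [Finite X]
    [Nonempty X] (t : X → ℕ) {A : Set ℤ} {δ : ℝ} (hδ : 0 ≤ δ) (hA : δ ≤ m (boundedIndicator A)) :
    δ / 2 ≤ m (boundedIndicator {n | δ / 2 ≤ density {x | n + (t x : ℤ) ∈ A}}) := by
  have := Fintype.ofFinite X
  have average_apply (z : ℤ) : ((Fintype.card X : ℝ)⁻¹ •
      ∑ x, boundedIndicator {n | n + (t x : ℤ) ∈ A}) z = density {x | z + (t x : ℤ) ∈ A} := by
    rw [density, avg_eq_expect, Fintype.expect_eq_sum_div_card, div_eq_inv_mul]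
    simp only [BoundedContinuousFunction.coe_smul, smul_eq_mul, BoundedContinuousFunction.coe_sum,
      Finset.sum_apply]
    rfl
  have average_le := hm.mono (f := (Fintype.card X : ℝ)⁻¹ •
    ∑ x, boundedIndicator {n | n + (t x : ℤ) ∈ A})
    (g := (δ / 2) • 1 + boundedIndicator {n | δ / 2 ≤ density {x | n + (t x : ℤ) ∈ A}}) fun z => by
      rw [average_apply]
      refine (le_add_indicator (f := fun z => density {x | z + (t x : ℤ) ∈ A}) (b := δ / 2)
        (by linarith) (fun _ => density_le_one _) z).trans_eq ?_
      simp [boundedIndicator_apply]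
  rw [map_smul, map_sum, map_add, hm.map_smul_one] at average_le
  simp only [hm.map_boundedIndicator_translate, sum_const, card_univ, nsmul_eq_mul, smul_eq_mul,
    inv_mul_cancel_left₀ (Nat.cast_ne_zero.2 Fintype.card_ne_zero : (Fintype.card X : ℝ) ≠ 0)]
    at average_le
  linarith

end IsInvariantMean

section RichPart

/-- The points of `A` for which a proportion at least `c` of the `J` integers up to that point lies
in `A`. -/
def richPart (A : Set ℤ) (c : ℝ) (J : ℕ) : Set ℤ :=
  {n | n ∈ A ∧ c * J ≤ ∑ j ∈ range J, A.indicator (1 : ℤ → ℝ) (n - j)}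

lemma richPart_subset (A : Set ℤ) (c : ℝ) (J : ℕ) : richPart A c J ⊆ A :=
  fun _ hn => hn.1

lemma sum_indicator_sdiff_richPart_le (A : Set ℤ) {c : ℝ} (hc : 0 ≤ c) (J : ℕ) (z : ℤ) :
    ∑ j ∈ range J, (A \ richPart A c J).indicator (1 : ℤ → ℝ) (z - j) ≤ c * J := by
  classical
  set P := A \ richPart A c J
  by_cases h : ∃ j < J, z - (j : ℤ) ∈ P
  · set j₀ := Nat.find h with hj₀
    obtain ⟨hlt, hmem⟩ := Nat.find_spec h
    rw [← hj₀] at hlt hmem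
    have sum_lt : ∑ j ∈ range J, A.indicator (1 : ℤ → ℝ) (z - j₀ - j) < c * J := by
      by_contra! hle
      exact hmem.2 ⟨hmem.1, hle⟩
    have sum_head : ∑ j ∈ Ico 0 j₀, P.indicator (1 : ℤ → ℝ) (z - j) = 0 :=
      sum_eq_zero fun j hj => Set.indicator_of_notMem (fun hmem' =>
        Nat.find_min h (mem_Ico.1 hj).2 ⟨(mem_Ico.1 hj).2.trans hlt, hmem'⟩) _
    calc ∑ j ∈ range J, P.indicator (1 : ℤ → ℝ) (z - j)
        = ∑ j ∈ range (J - j₀), P.indicator (1 : ℤ → ℝ) (z - j₀ - j) := by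
          rw [range_eq_Ico, ← sum_Ico_consecutive _ (Nat.zero_le j₀) hlt.le, sum_head, zero_add,
            sum_Ico_eq_sum_range]
          simp only [Nat.cast_add, sub_sub, range_eq_Ico]
      _ ≤ ∑ j ∈ range (J - j₀), A.indicator (1 : ℤ → ℝ) (z - j₀ - j) :=
          sum_le_sum fun j _ =>
            Set.indicator_le_indicator_of_subset Set.sdiff_subset (fun _ => zero_le_one) _
      _ ≤ ∑ j ∈ range J, A.indicator (1 : ℤ → ℝ) (z - j₀ - j) :=
          sum_le_sum_of_subset_of_nonneg (range_subset_range.2 (Nat.sub_le J j₀)) fun j _ _ =>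
            Set.indicator_nonneg (fun _ _ => zero_le_one) _
      _ ≤ c * J := sum_lt.le
  · push Not at h
    rw [sum_eq_zero fun j hj => Set.indicator_of_notMem (h j (mem_range.1 hj)) _]
    positivity

lemma IsInvariantMean.sub_le_boundedIndicator_richPart {m : (ℤ →ᵇ ℝ) →ₗ[ℝ] ℝ}
    (hm : IsInvariantMean m) (A : Set ℤ) {c : ℝ} (hc : 0 ≤ c) {J : ℕ} (hJ : 1 ≤ J) :
    m (boundedIndicator A) - c ≤ m (boundedIndicator (richPart A c J)) := by
  set P := A \ richPart A c J
  have split : boundedIndicator P = boundedIndicator A - boundedIndicator (richPart A c J) :=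
    DFunLike.coe_injective (Set.indicator_sdiff (richPart_subset A c J) 1)
  have sum_le : m (∑ j ∈ range J, (shift ^ j) (boundedIndicator P)) ≤ m ((c * J) • 1) :=
    hm.mono fun z => by
      simpa [shift_pow_apply, boundedIndicator_apply] using
        sum_indicator_sdiff_richPart_le A hc J z
  simp only [map_sum, hm.map_shift_pow, sum_const, card_range, nsmul_eq_mul,
    hm.map_smul_one] at sum_le
  have := le_of_mul_le_mul_left (sum_le.trans_eq (mul_comm _ _)) (by exact_mod_cast hJ)
  rw [split, map_sub] at this
  linarith

end RichPart

section GelfandNaimarkSegal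

universe u

lemma exists_completion_linearIsometry {V : Type u} [SeminormedAddCommGroup V]
    [InnerProductSpace ℝ V] (T : V →ₗᵢ[ℝ] V) :
    ∃ (H : Type u) (_ : NormedAddCommGroup H) (_ : InnerProductSpace ℝ H) (_ : CompleteSpace H)
      (U : H →ₗᵢ[ℝ] H) (φ : V →ₗ[ℝ] H), (∀ f g, inner ℝ (φ f) (φ g) = inner ℝ f g) ∧
      ∀ f, U (φ f) = φ (T f) := by
  let T' := T.toContinuousLinearMap.completion
  have T'_coe (v : V) : T' v = (T v : UniformSpace.Completion V) :=
    ContinuousLinearMap.completion_apply_coe _ _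
  have norm_T' (x) : ‖T' x‖ = ‖x‖ := by
    induction x using UniformSpace.Completion.induction_on with
    | hp => exact isClosed_eq (by fun_prop) (by fun_prop)
    | ih v => rw [T'_coe, UniformSpace.Completion.norm_coe, UniformSpace.Completion.norm_coe,
        T.norm_map]
  exact ⟨UniformSpace.Completion V, inferInstance, inferInstance, inferInstance,
    ⟨T'.toLinearMap, norm_T'⟩, UniformSpace.Completion.toComplₗᵢ.toLinearMap,
    UniformSpace.Completion.inner_coe, T'_coe⟩

lemma exists_hilbert_of_bilinForm {V : Type u} [AddCommGroup V] [Module ℝ V]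
    {B : LinearMap.BilinForm ℝ V} (hB : B.IsPosSemidef)
    {T : Module.End ℝ V} (hT : ∀ f, B (T f) (T f) = B f f) :
    ∃ (H : Type u) (_ : NormedAddCommGroup H) (_ : InnerProductSpace ℝ H) (_ : CompleteSpace H)
      (U : H →ₗᵢ[ℝ] H) (φ : V →ₗ[ℝ] H), (∀ f g, inner ℝ (φ f) (φ g) = B f g) ∧
      ∀ f, U (φ f) = φ (T f) := by
  let core : PreInnerProductSpace.Core ℝ V :=
    { inner := fun f g => B f g
      conj_inner_symm := fun f g => hB.isSymm.eq g f
      re_inner_nonneg := hB.nonneg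
      add_left := fun f f' g => by rw [map_add, LinearMap.add_apply]
      smul_left := fun f g r => by simp }
  let _ : SeminormedAddCommGroup V :=
    @InnerProductSpace.Core.toSeminormedAddCommGroup ℝ V _ _ _ core
  let _ : InnerProductSpace ℝ V := InnerProductSpace.ofCore core
  have norm_eq (f : V) : ‖f‖ = √(B f f) := rfl
  exact exists_completion_linearIsometry ⟨T, fun f => by rw [norm_eq, norm_eq, hT]⟩

end GelfandNaimarkSegal

section Recurrence

/-- The average over `r < R` of the correlations, with respect to `m`, of `f` shifted by `x + D * r`
and `g`. -/
noncomputable def progCorr (m : (ℤ →ᵇ ℝ) →ₗ[ℝ] ℝ) (f g : ℤ →ᵇ ℝ) (x D R : ℕ) : ℝ :=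
  (R : ℝ)⁻¹ * ∑ r ∈ range R, m ((shift ^ (x + D * r)) f * g)

variable {m : (ℤ →ᵇ ℝ) →ₗ[ℝ] ℝ}

theorem IsInvariantMean.exists_hilbert (hm : IsInvariantMean m) :
    ∃ (H : Type) (_ : NormedAddCommGroup H) (_ : InnerProductSpace ℝ H) (_ : CompleteSpace H)
      (U : H →ₗᵢ[ℝ] H) (φ : (ℤ →ᵇ ℝ) →ₗ[ℝ] H), (∀ f g, inner ℝ (φ f) (φ g) = m (f * g)) ∧
      ∀ f g x D R, inner ℝ (progAvg U x D R (φ f)) (φ g) = progCorr m f g x D R := by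
  let B : LinearMap.BilinForm ℝ (ℤ →ᵇ ℝ) := (LinearMap.mul ℝ (ℤ →ᵇ ℝ)).compr₂ m
  have B_apply (f g : ℤ →ᵇ ℝ) : B f g = m (f * g) := rfl
  have hB : B.IsPosSemidef :=
    { eq := fun f g => by simp only [B_apply, mul_comm f g]
      nonneg := fun f => hm.nonneg _ fun z => mul_self_nonneg (f z) }
  obtain ⟨H, _, _, _, U, φ, inner_φ, U_φ⟩ :=
    exists_hilbert_of_bilinForm hB (T := shift) fun f => hm.map_shift (f * f)
  have pow_φ (n : ℕ) (f : ℤ →ᵇ ℝ) : (U ^ n) (φ f) = φ ((shift ^ n) f) := by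
    induction n with
    | zero => rfl
    | succ n ih =>
      rw [pow_succ', pow_succ', Module.End.mul_apply, ← U_φ, ← ih]
      rfl
  refine ⟨H, _, _, ‹_›, U, φ, inner_φ, fun f g x D R => ?_⟩
  rw [progAvg_apply, real_inner_smul_left, sum_inner, progCorr]
  simp only [pow_φ, inner_φ, B_apply]

theorem IsInvariantMean.exists_abs_average_progCorr_sub_le (hm : IsInvariantMean m) (f : ℤ →ᵇ ℝ)
    {ε : ℝ} (hε : 0 < ε) (q₀ : ℕ) :
    ∃ Q R J : ℕ, 1 ≤ J ∧ ∀ d : ℕ, (∀ s, 1 ≤ s → s < Q → s ∣ d) → ∀ (x : ℕ → ℕ) (g : ℤ →ᵇ ℝ),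
      m (g * g) ≤ 1 → |(Q : ℝ)⁻¹ * ∑ q ∈ Ico q₀ (q₀ + Q), progCorr m f g (x q) (d * q + 1) R -
        progCorr m f g 0 1 J| ≤ ε := by
  obtain ⟨H, _, _, _, U, φ, inner_φ, inner_progAvg_φ⟩ := hm.exists_hilbert
  obtain ⟨Q, R, J, -, -, hJ, norm_le⟩ := exists_norm_average_progAvg_sub_le U (φ f) hε q₀
  refine ⟨Q, R, J, hJ, fun d hd x g hg => ?_⟩
  have norm_φ : ‖φ g‖ ≤ 1 := by
    rw [← sq_le_one_iff₀ (norm_nonneg _), ← real_inner_self_eq_norm_sq, inner_φ]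
    exact hg
  simp only [← inner_progAvg_φ]
  rw [← sum_inner, ← real_inner_smul_left, ← inner_sub_left]
  calc _ ≤ _ * ‖φ g‖ := abs_real_inner_le_norm _ _
    _ ≤ ε * 1 := mul_le_mul (norm_le d hd x) norm_φ (norm_nonneg _) hε.le
    _ = ε := mul_one ε

lemma progCorr_boundedIndicator_eq_zero {A B : Set ℤ} {x D R : ℕ}
    (h : ∀ r < R, ∀ z ∈ B, z - ((x + D * r : ℕ) : ℤ) ∉ A) :
    progCorr m (boundedIndicator A) (boundedIndicator B) x D R = 0 := by
  rw [progCorr, sum_eq_zero fun r hr => ?_, mul_zero]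
  convert map_zero m
  ext z
  rw [BoundedContinuousFunction.mul_apply, shift_pow_apply, BoundedContinuousFunction.coe_zero,
    Pi.zero_apply, mul_eq_zero, boundedIndicator_apply, boundedIndicator_apply,
    or_iff_not_imp_right]
  exact fun hz =>
    Set.indicator_of_notMem (h r (mem_range.1 hr) z (Set.mem_of_indicator_ne_zero hz)) _

lemma IsInvariantMean.mul_le_progCorr_of_subset_richPart (hm : IsInvariantMean m) {A B : Set ℤ}
    {c : ℝ} {J : ℕ} (hJ : 1 ≤ J) (hB : B ⊆ richPart A c J) :
    c * m (boundedIndicator B) ≤ progCorr m (boundedIndicator A) (boundedIndicator B) 0 1 J := by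
  have pointwise := hm.mono (f := (c * J) • boundedIndicator B)
    (g := (∑ r ∈ range J, (shift ^ (0 + 1 * r)) (boundedIndicator A)) * boundedIndicator B)
    fun z => by
      simp only [BoundedContinuousFunction.coe_mul, BoundedContinuousFunction.coe_smul,
        Pi.mul_apply, shift_pow_apply, BoundedContinuousFunction.coe_sum, Finset.sum_apply,
        zero_add, one_mul, smul_eq_mul, boundedIndicator_apply]
      by_cases hz : z ∈ B
      · exact mul_le_mul_of_nonneg_right (hB hz).2 (Set.indicator_nonneg (fun _ _ => zero_le_one) z)
      · rw [Set.indicator_of_notMem hz, mul_zero, mul_zero]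
  rw [map_smul, smul_eq_mul, sum_mul, map_sum, mul_right_comm, mul_comm] at pointwise
  rwa [progCorr, le_inv_mul_iff₀ (by exact_mod_cast hJ)]

theorem IsInvariantMean.exists_mem_sub_mem (hm : IsInvariantMean m) {A : Set ℤ} {c η : ℝ}
    (hc : 0 < c) (hη : 0 < η) (q₀ : ℕ) :
    ∃ Q R J : ℕ, 1 ≤ J ∧ ∀ d : ℕ, (∀ s, 1 ≤ s → s < Q → s ∣ d) → ∀ (x : ℕ → ℕ) (B : Set ℤ),
      B ⊆ richPart A c J → η ≤ m (boundedIndicator B) →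
      ∃ q ∈ Ico q₀ (q₀ + Q), ∃ r < R, ∃ n ∈ B, n - ((x q + (d * q + 1) * r : ℕ) : ℤ) ∈ A := by
  obtain ⟨Q, R, J, hJ, abs_le⟩ :=
    hm.exists_abs_average_progCorr_sub_le (boundedIndicator A) (half_pos (mul_pos hc hη)) q₀
  refine ⟨Q, R, J, hJ, fun d hd x B hB hηB => ?_⟩
  by_contra! h
  have sq_boundedIndicator : boundedIndicator B * boundedIndicator B = boundedIndicator B := by
    ext z
    by_cases hz : z ∈ B <;> simp [boundedIndicator_apply, hz]
  have abs_progCorr_le := abs_le d hd x (boundedIndicator B)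
    ((congrArg m sq_boundedIndicator).trans_le (hm.boundedIndicator_le_one B))
  rw [sum_eq_zero fun q hq => progCorr_boundedIndicator_eq_zero (h q hq), mul_zero, zero_sub,
    abs_neg] at abs_progCorr_le
  have le_progCorr := hm.mul_le_progCorr_of_subset_richPart hJ hB
  have := mul_le_mul_of_nonneg_left hηB hc.le
  linarith [le_abs_self (progCorr m (boundedIndicator A) (boundedIndicator B) 0 1 J), mul_pos hc hη]

lemma exists_sum_line_eq {k : ℕ} {ι : Type*} [Fintype ι] (l : Combinatorics.Line (Fin (k + 1)) ι)
    (s : ι → ℕ) : ∃ (t : ℕ) (S : Finset ι), S.Nonempty ∧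
      ∀ a : Fin (k + 1), ∑ i, (l a i : ℕ) * s i = t + a * ∑ i ∈ S, s i := by
  classical
  have ⟨i₀, hi₀⟩ := l.proper
  refine ⟨∑ i with l.idxFun i ≠ none, (l 0 i : ℕ) * s i, ({i | l.idxFun i = none} : Finset ι),
    ⟨i₀, by simpa using hi₀⟩, fun a => ?_⟩
  rw [← sum_filter_not_add_sum_filter univ (fun i => l.idxFun i = none), mul_sum]
  congr 1
  · refine sum_congr rfl fun i hi => ?_
    obtain ⟨v, hv⟩ := Option.ne_none_iff_exists'.1 (mem_filter.1 hi).2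
    rw [l.apply_some hv, l.apply_some hv]
  · exact sum_congr rfl fun i hi => by rw [l.apply_none _ _ (mem_filter.1 hi).2]

theorem IsInvariantMean.exists_sum_le_boundedIndicator (hm : IsInvariantMean m) (k : ℕ) {δ : ℝ}
    (hδ : 0 < δ) : ∃ (ι : Type) (_ : Finite ι) (c : ℝ), 0 < c ∧
      ∀ A, δ ≤ m (boundedIndicator A) → ∀ s : ι → ℕ, ∃ S : Finset ι, S.Nonempty ∧
        c ≤ m (boundedIndicator {n | ∀ i ≤ k, n + ((i * ∑ j ∈ S, s j : ℕ) : ℤ) ∈ A}) := by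
  obtain ⟨ι, _, exists_line⟩ := densityHJ_fin k (δ / 2) (half_pos hδ)
  have := Fintype.ofFinite ι
  let Φ := Combinatorics.Line (Fin (k + 1)) ι
  refine ⟨ι, ‹_›, δ / 2 / (Nat.card Φ + 1), by positivity, fun A hA s => ?_⟩
  let val (w : ι → Fin (k + 1)) : ℕ := ∑ i, (w i : ℕ) * s i
  have le_iUnion : δ / 2 ≤
      m (boundedIndicator (⋃ l : Φ, {n | ∀ a, n + (val (l a) : ℤ) ∈ A})) :=
    (hm.half_le_boundedIndicator_density val hδ.le hA).trans
      (hm.boundedIndicator_mono fun n hn => Set.mem_iUnion.2 (exists_line _ hn))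
  obtain ⟨l, hl⟩ := hm.exists_div_card_le (half_pos hδ) le_iUnion
  obtain ⟨t, S, hS, sum_eq⟩ := exists_sum_line_eq l s
  have : Nonempty Φ := ⟨l⟩
  have div_le := div_le_div_of_nonneg_left (half_pos hδ).le (Nat.cast_pos.2 Nat.card_pos)
    (lt_add_one (Nat.card Φ : ℝ)).le
  refine ⟨S, hS, div_le.trans (hl.trans ?_)⟩
  rw [← hm.map_boundedIndicator_translate t {n | ∀ i ≤ k, n + ((i * ∑ j ∈ S, s j : ℕ) : ℤ) ∈ A}]
  refine hm.boundedIndicator_mono fun n hn i hi => ?_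
  convert hn ⟨i, Nat.lt_succ_of_le hi⟩ using 1
  rw [show val (l ⟨i, Nat.lt_succ_of_le hi⟩) = _ from sum_eq _, Nat.cast_add, add_assoc]

theorem IsInvariantMean.exists_progression_sub_mem (hm : IsInvariantMean m) {A : Set ℤ}
    (hA : 0 < m (boundedIndicator A)) (k q₀ : ℕ) :
    ∃ (ι : Type) (_ : Finite ι) (Q R : ℕ), ∀ s : ι → ℕ, ∃ S : Finset ι, S.Nonempty ∧
      ∀ d, d = ∑ j ∈ S, s j → (∀ t, 1 ≤ t → t < Q → t ∣ d) → ∀ x : ℕ → ℕ,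
        ∃ q ∈ Ico q₀ (q₀ + Q), ∃ r < R, ∃ n : ℤ,
          n - ((x q + (d * q + 1) * r : ℕ) : ℤ) ∈ A ∧ ∀ i ≤ k, n + ((i * d : ℕ) : ℤ) ∈ A := by
  obtain ⟨δ, hδ⟩ : ∃ δ, δ = m (boundedIndicator A) / 2 := ⟨_, rfl⟩
  have δ_pos : 0 < δ := hδ ▸ half_pos hA
  obtain ⟨ι, _, c, hc, exists_sum_le⟩ := hm.exists_sum_le_boundedIndicator k δ_pos
  obtain ⟨Q, R, J, hJ, exists_mem⟩ := hm.exists_mem_sub_mem (A := A) δ_pos hc q₀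
  refine ⟨ι, ‹_›, Q, R, fun s => ?_⟩
  have le_richPart := hm.sub_le_boundedIndicator_richPart A δ_pos.le hJ
  obtain ⟨S, hS, le_progressions⟩ := exists_sum_le (richPart A δ J) (by linarith) s
  refine ⟨S, hS, fun d hd hdvd x => ?_⟩
  rw [← hd] at le_progressions
  obtain ⟨q, hq, r, hr, n, hn, hmem⟩ := exists_mem d hdvd x
    {n | ∀ i ≤ k, n + ((i * d : ℕ) : ℤ) ∈ richPart A δ J}
    (fun n hn => by simpa using hn 0 k.zero_le) le_progressions
  exact ⟨q, hq, r, hr, n, hmem, fun i hi => (hn i hi).1⟩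

end Recurrence

section FloorPow

lemma eventually_cubic_pos {a : ℝ} (ha : 0 < a) (b c d : ℝ) :
    ∀ᶠ u : ℕ in atTop, 0 < a * u ^ 3 + b * u ^ 2 + c * u + d := by
  have tendsto_toPoly := (Cubic.mk a b c d).toPoly.tendsto_atTop_of_leadingCoeff_nonneg
    (by simp [Cubic.degree_of_a_ne_zero (P := ⟨a, b, c, d⟩) ha.ne'])
    (by simp [Cubic.leadingCoeff_of_a_ne_zero (P := ⟨a, b, c, d⟩) ha.ne', ha.le])
  simpa [Cubic.toPoly] using
    (tendsto_toPoly.comp tendsto_natCast_atTop_atTop).eventually_gt_atTop 0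

lemma floor_rpow_three_halves_eq {x y : ℕ} (hle : (y : ℝ) ^ 2 ≤ (x : ℝ) ^ 3)
    (hlt : (x : ℝ) ^ 3 < (y + 1 : ℝ) ^ 2) : ⌊(x : ℝ) ^ ((3 : ℝ) / 2)⌋₊ = y := by
  have rpow_eq_sqrt : (x : ℝ) ^ ((3 : ℝ) / 2) = √((x : ℝ) ^ 3) := by
    rw [Real.sqrt_eq_rpow, ← Real.rpow_natCast_mul x.cast_nonneg]
    norm_num
  rw [rpow_eq_sqrt, Nat.floor_eq_iff (Real.sqrt_nonneg _)]
  exact ⟨Real.le_sqrt_of_sq_le hle, (Real.sqrt_lt' (by positivity)).2 hlt⟩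

/-- A perfect square up to a bounded error, `(6q²u + 2/(3q))² - 4/(9q²)`, at which the derivative of
`x ^ (3/2)` is close to `9q²u + 1/q`. -/
def anchor (q u : ℕ) : ℕ :=
  36 * q ^ 4 * u ^ 2 + 8 * q * u

/-- The value of `x ^ (3/2)` at `anchor q u`, up to a bounded error. -/
def anchorValue (q u : ℕ) : ℕ :=
  216 * q ^ 6 * u ^ 3 + 72 * q ^ 3 * u ^ 2 + 4 * u

theorem eventually_floor_anchor_add {q i : ℕ} (hi : 0 < i) (hiq : i < q) (r : ℕ) :
    ∀ᶠ u : ℕ in atTop, ⌊((anchor q u + (q * r + i) : ℕ) : ℝ) ^ ((3 : ℝ) / 2)⌋₊ =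
      anchorValue q u + (q * r + i) * (9 * q ^ 2 * u) + r := by
  have one_le_i : (1 : ℝ) ≤ i := by exact_mod_cast hi
  have i_add_one_le : (i + 1 : ℝ) ≤ q := by exact_mod_cast hiq
  have pow_le : (q : ℝ) ^ 3 ≤ q ^ 5 := pow_le_pow_right₀ (by linarith) (by norm_num)
  have q_pos : 0 < (q : ℝ) := by linarith
  have q_pow_pos : 0 < (q : ℝ) ^ 3 := by positivity
  -- `a`, `b`, `c`, `e` are the coefficients of `x³ - y²` as a polynomial in `u`, where `x` is the
  -- argument and `y` the claimed value: all terms of degree at least four cancel.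
  set t : ℝ := q * r + i with ht
  set a : ℝ := 432 * q ^ 5 * i - 64 * q ^ 3 with ha
  set b : ℝ := 192 * q ^ 2 * t + 108 * q ^ 4 * t ^ 2 - (4 + 9 * q ^ 2 * t) ^ 2 - 144 * q ^ 3 * r
    with hb
  set c : ℝ := 24 * q * t ^ 2 - 2 * (4 + 9 * q ^ 2 * t) * r with hc
  set e : ℝ := t ^ 3 - r ^ 2 with he
  have a_pos : 0 < a := by
    nlinarith
  have a_lt : 0 < 432 * q ^ 6 - a := by
    nlinarith [pow_succ (q : ℝ) 5, q_pow_pos]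
  filter_upwards [eventually_cubic_pos a_pos b c e,
    eventually_cubic_pos a_lt (144 * q ^ 3 - b) (2 * (4 + 9 * q ^ 2 * t) - c) (2 * r + 1 - e)]
    with u lower upper
  apply floor_rpow_three_halves_eq
  · refine sub_nonneg.1 (lower.le.trans_eq ?_)
    simp only [anchor, anchorValue, ha, hb, hc, he, ht]
    push_cast
    ring
  · refine sub_pos.1 (upper.trans_eq ?_)
    simp only [anchor, anchorValue, ha, hb, hc, he, ht]
    push_cast
    ring

end FloorPow

section Patterns

/-- The integer `n` is the start of a pattern `a, a + ⌊n^{3/2}⌋, …, a + ⌊(n+k)^{3/2}⌋` in `E`. -/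
def IsPatternStart (E : Set ℕ) (k n : ℕ) : Prop :=
  ∃ a : ℕ, 1 ≤ a ∧ a ∈ E ∧ ∀ i ≤ k, a + ⌊((n + i : ℕ) : ℝ) ^ ((3 : ℝ) / 2)⌋₊ ∈ E

/-- A set of natural numbers is thick if it contains arbitrarily long intervals. -/
def IsThick (V : Set ℕ) : Prop :=
  ∀ L : ℕ, ∃ y, Set.Icc y (y + L) ⊆ V

lemma IsThick.inter_Ici {V : Set ℕ} (hV : IsThick V) (d₀ : ℕ) : IsThick (V ∩ Set.Ici d₀) := by
  intro L
  obtain ⟨y, hy⟩ := hV (d₀ + L)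
  exact ⟨y + d₀, fun d hd => ⟨hy ⟨by grind, by grind⟩, by grind⟩⟩

lemma IsThick.exists_dvd_add_mem {V : Set ℕ} (hV : IsThick V) {D : ℕ} (hD : 0 < D) (L : ℕ) :
    ∃ v, D ∣ v ∧ ∀ j ≤ L, v + j ∈ V := by
  obtain ⟨y, hy⟩ := hV (D + L)
  refine ⟨D * (y / D + 1), dvd_mul_right _ _, fun j hj => hy ?_⟩
  have := Nat.div_add_mod y D
  have := Nat.mod_lt y hD
  rw [Set.mem_Icc, mul_add]
  omega

theorem IsThick.exists_sum_mem {ι : Type*} [Finite ι] {V : Set ℕ} (hV : IsThick V) {D : ℕ}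
    (hD : 0 < D) : ∃ s : ι → ℕ, (∀ i, D ∣ s i) ∧
      ∀ S : Finset ι, S.Nonempty → ∑ j ∈ S, s j ∈ V := by
  classical
  have := Fintype.ofFinite ι
  suffices ∀ T : Finset ι, ∃ s : ι → ℕ, (∀ i, D ∣ s i) ∧
      ∀ S ⊆ T, S.Nonempty → ∑ j ∈ S, s j ∈ V by
    obtain ⟨s, hdvd, hmem⟩ := this univ
    exact ⟨s, hdvd, fun S => hmem S (subset_univ S)⟩
  intro T
  induction T using Finset.induction_on with
  | empty => exact ⟨0, fun _ => dvd_zero D, fun S hS hne => (hne.ne_empty (subset_empty.1 hS)).elim⟩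
  | insert i T hi ih =>
    obtain ⟨s, hdvd, hmem⟩ := ih
    obtain ⟨v, hDv, hv⟩ := hV.exists_dvd_add_mem hD (∑ j ∈ T, s j)
    have sum_update {S : Finset ι} (hS : i ∉ S) : ∑ j ∈ S, Function.update s i v j = ∑ j ∈ S, s j :=
      sum_congr rfl fun j hj => Function.update_of_ne (ne_of_mem_of_not_mem hj hS) _ _
    refine ⟨Function.update s i v, fun j => ?_, fun S hS hne => ?_⟩
    · rcases eq_or_ne j i with rfl | hj
      · rwa [Function.update_self]
      · rw [Function.update_of_ne hj]
        exact hdvd j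
    · by_cases hiS : i ∈ S
      · rw [← add_sum_erase S _ hiS, Function.update_self, sum_update (notMem_erase i S)]
        exact hv _ (sum_le_sum_of_subset (subset_insert_iff.1 hS))
      · rw [sum_update hiS]
        exact hmem S ((subset_insert_iff_of_notMem hiS).1 hS) hne

lemma four_mul_sq_le_nine_mul_anchor_add (q u t : ℕ) :
    4 * (9 * q ^ 2 * u) ^ 2 ≤ 9 * (anchor q u + t) := by
  have expand : 9 * (anchor q u + t) = 4 * (9 * q ^ 2 * u) ^ 2 + 9 * (8 * q * u + t) := by
    rw [anchor]
    ring
  exact expand ▸ Nat.le_add_right _ _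

lemma nine_mul_anchor_add_le {q u r : ℕ} (hr : r ≤ u) :
    9 * (anchor q u + (q * r + 1)) ≤ 4 * (9 * q ^ 2 * u + 2) ^ 2 := by
  have qr_le : q * r ≤ q * u := Nat.mul_le_mul_left q hr
  have qu_le : q * u ≤ q ^ 2 * u := Nat.mul_le_mul_right u (Nat.le_self_pow two_ne_zero q)
  rw [anchor]
  nlinarith

lemma isPatternStart_anchor_add {E : Set ℕ} {k q r u : ℕ}
    (hfloor : ∀ i ∈ Icc 1 (k + 1), ⌊((anchor q u + (q * r + i) : ℕ) : ℝ) ^ ((3 : ℝ) / 2)⌋₊ =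
      anchorValue q u + (q * r + i) * (9 * q ^ 2 * u) + r)
    {n : ℤ} (hn : n - ((anchorValue q u + 9 * q ^ 2 * u + (9 * q ^ 2 * u * q + 1) * r : ℕ) : ℤ) ∈
      Nat.cast '' (E \ {0}))
    (hprog : ∀ i ≤ k, n + ((i * (9 * q ^ 2 * u) : ℕ) : ℤ) ∈ Nat.cast '' (E \ {0})) :
    IsPatternStart E k (anchor q u + (q * r + 1)) := by
  obtain ⟨a, ⟨haE, ha⟩, a_eq⟩ := hn
  refine ⟨a, Nat.one_le_iff_ne_zero.2 ha, haE, fun i hi => ?_⟩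
  obtain ⟨b, ⟨hbE, -⟩, b_eq⟩ := hprog i hi
  have add_floor : a + ⌊((anchor q u + (q * r + 1) + i : ℕ) : ℝ) ^ ((3 : ℝ) / 2)⌋₊ = b := by
    rw [add_assoc _ _ i, add_assoc _ 1 i, hfloor (1 + i) (mem_Icc.2 ⟨by omega, by omega⟩)]
    zify
    rw [a_eq, b_eq]
    push_cast
    ring
  rwa [add_floor]

theorem exists_isPatternStart {E : Set ℕ} (hE : posUBD E) (k : ℕ) {V : Set ℕ} (hV : IsThick V) :
    ∃ d ∈ V, ∃ n, IsPatternStart E k n ∧ 4 * d ^ 2 ≤ 9 * n ∧ 9 * n ≤ 4 * (d + 2) ^ 2 := by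
  obtain ⟨m, hm, m_pos⟩ := exists_isInvariantMean_of_posUBD hE
  obtain ⟨ι, _, Q, R, exists_progression⟩ := hm.exists_progression_sub_mem m_pos k (k + 2)
  have floor_eq : ∀ᶠ u in atTop, ∀ q ∈ Ico (k + 2) (k + 2 + Q), ∀ r ∈ range R, ∀ i ∈ Icc 1 (k + 1),
      ⌊((anchor q u + (q * r + i) : ℕ) : ℝ) ^ ((3 : ℝ) / 2)⌋₊ =
        anchorValue q u + (q * r + i) * (9 * q ^ 2 * u) + r := by
    simp only [eventually_all_finset]
    exact fun q hq r _ i hi => eventually_floor_anchor_add (mem_Icc.1 hi).1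
      (by grind only [mem_Ico, mem_Icc]) r
  obtain ⟨u₀, hu₀⟩ := eventually_atTop.1 floor_eq
  set w := (k + 2 + Q).factorial
  have dvd_w {t : ℕ} (ht : 0 < t) (htQ : t < k + 2 + Q) : t ∣ w := Nat.dvd_factorial ht htQ.le
  have D_pos : 0 < 9 * w ^ 2 := by positivity
  obtain ⟨s, hdvd, hmem⟩ :=
    (hV.inter_Ici (9 * w ^ 2 * (u₀ + R))).exists_sum_mem (ι := ι) D_pos
  obtain ⟨S, hS, hprog⟩ := exists_progression s
  obtain ⟨d, hd⟩ : ∃ d, d = ∑ j ∈ S, s j := ⟨_, rfl⟩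
  obtain ⟨hdV, hle⟩ := hd ▸ hmem S hS
  have D_dvd : 9 * w ^ 2 ∣ d := hd ▸ dvd_sum fun j _ => hdvd j
  obtain ⟨q, hq, r, hr, n, hn, hni⟩ := hprog d hd
    (fun t ht htQ => (dvd_w ht (by omega)).trans ((Dvd.intro_left (9 * w) (by ring)).trans D_dvd))
    (fun q => anchorValue q (d / (9 * q ^ 2)) + d)
  have q_pos : 0 < q := by grind only [mem_Ico]
  have nine_q_sq_dvd : 9 * q ^ 2 ∣ 9 * w ^ 2 :=
    mul_dvd_mul_left 9 (pow_dvd_pow_of_dvd (dvd_w q_pos (mem_Ico.1 hq).2) 2)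
  obtain ⟨u, rfl⟩ := nine_q_sq_dvd.trans D_dvd
  have le_u : u₀ + R ≤ u := Nat.le_of_mul_le_mul_left
    ((Nat.mul_le_mul_right _ (Nat.le_of_dvd D_pos nine_q_sq_dvd)).trans hle) (by positivity)
  rw [Nat.mul_div_cancel_left u (by positivity)] at hn
  exact ⟨_, hdV, anchor q u + (q * r + 1),
    isPatternStart_anchor_add (hu₀ u (by omega) q hq r (mem_range.2 hr)) hn hni,
    four_mul_sq_le_nine_mul_anchor_add q u _, nine_mul_anchor_add_le (by omega)⟩

lemma eventually_exists_Icc_subset {ε : ℝ} (hε : 0 < ε) (L : ℕ) :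
    ∀ᶠ N : ℕ in atTop, ∃ y, Set.Icc y (y + L) ⊆
      {d : ℕ | 4 * (d + 2) ^ 2 ≤ 9 * N ∧
        (N : ℝ) - (N : ℝ) ^ ((1 : ℝ) / 2 + ε) ≤ 4 / 9 * (d : ℝ) ^ 2} := by
  have tendsto_rpow : Tendsto (fun N : ℕ => (N : ℝ) ^ ε) atTop atTop :=
    (tendsto_rpow_atTop hε).comp tendsto_natCast_atTop_atTop
  filter_upwards [tendsto_rpow.eventually_ge_atTop (4 / 3 * (L + 3)),
    eventually_ge_atTop ((L + 4) ^ 2)] with N le_rpow le_N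
  have N_pos : (0 : ℝ) < N := by exact_mod_cast le_N.trans_lt' (by positivity)
  set s := √(N : ℝ)
  have s_sq : s ^ 2 = N := Real.sq_sqrt N_pos.le
  have rpow_eq : (N : ℝ) ^ ((1 : ℝ) / 2 + ε) = s * (N : ℝ) ^ ε := by
    rw [Real.rpow_add N_pos, ← Real.sqrt_eq_rpow]
  have le_s : (L + 4 : ℝ) ≤ s := Real.le_sqrt_of_sq_le (by exact_mod_cast le_N)
  obtain ⟨z, z_le, lt_z⟩ : ∃ z : ℕ, (z : ℝ) ≤ 3 / 2 * s ∧ 3 / 2 * s < z + 1 :=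
    ⟨_, Nat.floor_le (by positivity), Nat.lt_floor_add_one _⟩
  have le_z : L + 2 ≤ z := by exact_mod_cast (by linarith : (L + 2 : ℝ) ≤ z)
  refine ⟨z - L - 2, fun d hd => ?_⟩
  have le_d : (z : ℝ) ≤ d + L + 2 := by exact_mod_cast (by grind : z ≤ d + L + 2)
  have d_le : (d + 2 : ℝ) ≤ z := by exact_mod_cast (by grind : d + 2 ≤ z)
  constructor
  · have upper : 4 * (d + 2 : ℝ) ^ 2 ≤ 9 * (N : ℝ) := calc
      4 * (d + 2 : ℝ) ^ 2 ≤ 4 * (3 / 2 * s) ^ 2 := by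
        gcongr
        exact d_le.trans z_le
      _ = 9 * (N : ℝ) := by
        rw [mul_pow, s_sq]
        ring
    exact_mod_cast upper
  · have lower : (3 / 2 * s - (L + 3)) ^ 2 ≤ (d : ℝ) ^ 2 := by
      gcongr <;> linarith
    have le_mul_rpow : s * (4 / 3 * (L + 3)) ≤ s * (N : ℝ) ^ ε := by gcongr
    rw [rpow_eq]
    nlinarith [sq_nonneg (L + 3 : ℝ)]

end Patterns

/-- combinatorial corollary for `f(n) = n^{3/2}`: configurations
`{a, a+⌊n^{3/2}⌋, …, a+⌊(n+k)^{3/2}⌋} ⊆ E` with `n ∈ [N − N^{1/2+ε}, N]` for all large `N`. -/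
theorem stmt14 (E : Set ℕ) (hE : posUBD E)
    (k : ℕ) (hk : 1 ≤ k) (ε : ℝ) (hε : 0 < ε) :
    ∀ᶠ N : ℕ in atTop, ∃ n a : ℕ, 1 ≤ a ∧
      (N : ℝ) - (N : ℝ) ^ ((1 : ℝ) / 2 + ε) ≤ (n : ℝ) ∧ n ≤ N ∧
      a ∈ E ∧ ∀ i : ℕ, i ≤ k → a + ⌊((n + i : ℕ) : ℝ) ^ ((3 : ℝ) / 2)⌋₊ ∈ E := by
  by_contra not_eventually
  rw [Filter.not_eventually] at not_eventually
  let IsBad (N : ℕ) : Prop := ¬ ∃ n a : ℕ, 1 ≤ a ∧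
    (N : ℝ) - (N : ℝ) ^ ((1 : ℝ) / 2 + ε) ≤ (n : ℝ) ∧ n ≤ N ∧
    a ∈ E ∧ ∀ i : ℕ, i ≤ k → a + ⌊((n + i : ℕ) : ℝ) ^ ((3 : ℝ) / 2)⌋₊ ∈ E
  have thick : IsThick {d : ℕ | ∃ N, IsBad N ∧ 4 * (d + 2) ^ 2 ≤ 9 * N ∧
      (N : ℝ) - (N : ℝ) ^ ((1 : ℝ) / 2 + ε) ≤ 4 / 9 * (d : ℝ) ^ 2} := fun L => by
    obtain ⟨N, hN, y, hy⟩ :=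
      (not_eventually.and_eventually (eventually_exists_Icc_subset hε L)).exists
    exact ⟨y, fun d hd => ⟨N, hN, hy hd⟩⟩
  obtain ⟨d, ⟨N, hN, le_N, le_d⟩, n, ⟨a, ha, haE, pattern⟩, le_n, n_le⟩ :=
    exists_isPatternStart hE k thick
  have cast_le_n : (4 * d ^ 2 : ℝ) ≤ 9 * n := by exact_mod_cast le_n
  exact hN ⟨n, a, ha, by linarith, by omega, haE, pattern⟩
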